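/- arXiv:2512.05054 — 3 statements merged into one kernel-verified Lean document; each statement's English description precedes it below -/
import Mathlib

section
/- (Nehari–Schaefer fixed point theorem.) Assume conditions (a1), (a2), (a3), and the Leray–Schauder boundary condition: v ≠ λ·T₂(u,v) for all u ∈ K₁, all v ∈ X₂ with |v|₂ = R, and all λ ∈ (0,1). Then the operator (T₁, T₂) has a fixed point in K₁ × B_R, i.e. there exist u ∈ K₁ and v ∈ B_R with T₁(u,v) = u and T₂(u,v) = v. -/
/-!
Shrink `u` by the factor `min 1 (s u v)` and retract `v` radially onto the ball: the composite of
`(T₁, T₂)` with these two retractions has a relatively compact range, so it has a fixed point by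
Schauder's theorem. The fixed point is one of `(T₁, T₂)` as soon as neither retraction moves it. If
`s u v < 1`, then `w = s u v • u` lies on the Nehari set while `T₁ w v` is a multiple of `w` with
factor `> 1`, so `F (T₁ w v) w` both vanishes and does not vanish. If `‖v‖ > R`, then the retracted
`v` violates the boundary condition.

Schauder's theorem reduces to Brouwer's by partitions of unity, and Brouwer's theorem to the
nonexistence of a retraction `r` of the ball onto the sphere. For `h = r - id`, extended by zero,
`∫ det (1 + t Dh)` over the ball is a polynomial in `t`. For small `t` the map `id + t h` is a
bijection of the ball, so the integral is the volume of the ball, and hence this also holds for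
`t = 1`. But `det (1 + Dh) = det Dr = 0`, since the values of `r` lie on the sphere.
-/

open Set Filter Topology Metric MeasureTheory
open scoped NNReal ENNReal RealInnerProductSpace

section VolumeIdentity

theorem bijective_id_add_of_lipschitzWith {E : Type*} [NormedAddCommGroup E] [NormedSpace ℝ E]
    [CompleteSpace E] {k : E → E} {C : ℝ≥0} (hC : C < 1) (hk : LipschitzWith C k) :
    Function.Bijective fun x => x + k x := by
  have happrox : ApproximatesLinearOn (fun x => x + k x)
      (ContinuousLinearEquiv.refl ℝ E : E →L[ℝ] E) univ C := by
    intro x _ y _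
    simpa [add_sub_add_comm] using hk.norm_sub_le x y
  have hsmall : Subsingleton E ∨
      C < ‖((ContinuousLinearEquiv.refl ℝ E).symm : E →L[ℝ] E)‖₊⁻¹ := by
    rcases subsingleton_or_nontrivial E with hE | hE
    · exact .inl hE
    · right
      simpa using hC
  exact ⟨injOn_univ.1 (happrox.injOn hsmall), happrox.surjective hsmall⟩

theorem det_one_add_pos_of_norm_lt_one {E : Type*} [NormedAddCommGroup E] [NormedSpace ℝ E]
    [FiniteDimensional ℝ E] {A : E →L[ℝ] E} (hA : ‖A‖ < 1) : 0 < (1 + A).det := by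
  have hne : ∀ τ ∈ Icc (0 : ℝ) 1, (1 + τ • A).det ≠ 0 := by
    intro τ hτ
    have hnorm : ‖-(τ • A)‖ < 1 := by
      rw [norm_neg, norm_smul, Real.norm_of_nonneg hτ.1]
      exact (mul_le_of_le_one_left (norm_nonneg A) hτ.2).trans_lt hA
    have hunit : IsUnit (1 + τ • A) := by
      simpa only [sub_neg_eq_add] using isUnit_one_sub_of_norm_lt_one hnorm
    exact ((hunit.map ContinuousLinearMap.toLinearMapRingHom).map LinearMap.det).ne_zero
  have hcont : ContinuousOn (fun τ : ℝ => (1 + τ • A).det) (Icc 0 1) :=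
    (ContinuousLinearMap.continuous_det.comp (by fun_prop)).continuousOn
  by_contra! hneg
  obtain ⟨τ, hτ, hzero⟩ := intermediate_value_Icc' zero_le_one hcont
    (show (0 : ℝ) ∈ _ from ⟨by simpa using hneg, by simp [ContinuousLinearMap.det]⟩)
  exact hne τ hτ hzero

-- `τ ↦ det (1 + τ A)` is a polynomial of degree at most `dim V`, so Lagrange interpolation on `s`
-- recovers its value at `1`.
theorem exists_det_one_add_eq_sum {𝕜 V : Type*} [Field 𝕜] [AddCommGroup V] [Module 𝕜 V]
    [FiniteDimensional 𝕜 V] {s : Finset 𝕜} (hs : Module.finrank 𝕜 V < s.card) :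
    ∃ c : 𝕜 → 𝕜, ∀ A : Module.End 𝕜 V,
      LinearMap.det (1 + A) = ∑ τ ∈ s, c τ * LinearMap.det (1 + τ • A) := by
  classical
  refine ⟨fun τ => (Lagrange.basis s id τ).eval 1, fun A => ?_⟩
  let b := Module.finBasis 𝕜 V
  let B := LinearMap.toMatrix b b A
  let P : Matrix _ _ (Polynomial 𝕜) := (Polynomial.X : Polynomial 𝕜) • B.map Polynomial.C
    + (1 : Matrix _ _ 𝕜).map Polynomial.C
  let p := P.det
  have heval : ∀ τ, p.eval τ = LinearMap.det (1 + τ • A) := by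
    intro τ
    have hP : (Polynomial.evalRingHom τ).mapMatrix P = 1 + τ • B := by
      ext i j
      simp [P, Matrix.one_apply, apply_ite (Polynomial.eval τ), add_comm, mul_comm τ]
    rw [← LinearMap.det_toMatrix b, ← Polynomial.coe_evalRingHom, RingHom.map_det, hP, map_add,
      map_smul, LinearMap.toMatrix_one]
  have hdeg : p.degree < s.card := by
    have hnat := Polynomial.natDegree_det_X_add_C_le B 1
    rw [Fintype.card_fin] at hnat
    exact Polynomial.degree_le_natDegree.trans_lt (mod_cast hnat.trans_lt hs)
  calc LinearMap.det (1 + A) = p.eval 1 := by rw [heval, one_smul]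
    _ = (Lagrange.interpolate s id fun τ => p.eval τ).eval 1 :=
        congrArg _ (Lagrange.eq_interpolate (injOn_id _) hdeg)
    _ = ∑ τ ∈ s, (Lagrange.basis s id τ).eval 1 * LinearMap.det (1 + τ • A) := by
        rw [Lagrange.interpolate_apply, Polynomial.eval_finsetSum]
        refine Finset.sum_congr rfl fun τ _ => ?_
        rw [Polynomial.eval_mul, Polynomial.eval_C, heval, mul_comm]

variable {E : Type*} [NormedAddCommGroup E] [NormedSpace ℝ E] [FiniteDimensional ℝ E]
  [MeasurableSpace E] [BorelSpace E] {μ : Measure E} {U : Set E} {h : E → E} {C : ℝ≥0}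

theorem integrableOn_det_one_add_fderiv (hμU : μ U ≠ ∞) (hlip : LipschitzWith C h) :
    IntegrableOn (fun x => (1 + fderiv ℝ h x).det) U μ := by
  have hdet : Continuous fun A : E →L[ℝ] E => (1 + A).det :=
    ContinuousLinearMap.continuous_det.comp (by fun_prop)
  obtain ⟨D, hD⟩ := (isCompact_closedBall (0 : E →L[ℝ] E) C).exists_bound_of_continuousOn
    hdet.continuousOn
  refine Measure.integrableOn_of_bounded hμU (M := D)
    (hdet.measurable.comp (measurable_fderiv ℝ h)).aestronglyMeasurable (ae_of_all _ fun x => ?_)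
  exact hD _ (mem_closedBall_zero_iff.2 (norm_fderiv_le_of_lipschitz ℝ hlip))

variable [μ.IsAddHaarMeasure]

theorem integral_det_one_add_fderiv_of_lt_one (hU : IsOpen U) (hC : C < 1)
    (hlip : LipschitzWith C h) (hd : DifferentiableOn ℝ h U) (h0 : ∀ x ∉ U, h x = 0) :
    ∫ x in U, (1 + fderiv ℝ h x).det ∂μ = μ.real U := by
  have hbij := bijective_id_add_of_lipschitzWith hC hlip
  have himage : (fun x => x + h x) '' U = U := by
    have hcompl : (fun x => x + h x) '' Uᶜ = Uᶜ := by
      simpa using image_congr fun x hx => show x + h x = x by rw [h0 x hx, add_zero]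
    rw [← compl_inj_iff, ← image_compl_eq hbij, hcompl]
  have hderiv : ∀ x ∈ U, HasFDerivWithinAt (fun x => x + h x) (1 + fderiv ℝ h x) U x :=
    fun x hx => ((hasFDerivAt_id x).add
      (hd.differentiableAt (hU.mem_nhds hx)).hasFDerivAt).hasFDerivWithinAt
  calc ∫ x in U, (1 + fderiv ℝ h x).det ∂μ = ∫ x in U, |(1 + fderiv ℝ h x).det| ∂μ := by
        refine integral_congr_ae (ae_of_all _ fun x => (abs_of_pos ?_).symm)
        exact det_one_add_pos_of_norm_lt_one
          ((norm_fderiv_le_of_lipschitz ℝ hlip).trans_lt (mod_cast hC))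
    _ = ∫ _ in (fun x => x + h x) '' U, (1 : ℝ) ∂μ := by
        rw [integral_image_eq_integral_abs_det_fderiv_smul μ hU.measurableSet hderiv hbij.1.injOn]
        simp only [smul_eq_mul, mul_one]
    _ = μ.real U := by rw [himage, setIntegral_const, smul_eq_mul, mul_one]

theorem integrableOn_and_integral_det_one_add_smul_fderiv {τ : ℝ≥0} (hτ : τ * C < 1)
    (hU : IsOpen U) (hμU : μ U ≠ ∞) (hlip : LipschitzWith C h) (hd : DifferentiableOn ℝ h U)
    (h0 : ∀ x ∉ U, h x = 0) :
    IntegrableOn (fun x => (1 + (τ : ℝ) • fderiv ℝ h x).det) U μ ∧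
      ∫ x in U, (1 + (τ : ℝ) • fderiv ℝ h x).det ∂μ = μ.real U := by
  have hlip_smul : LipschitzWith (τ * C) ((τ : ℝ) • h) := by
    have := (lipschitzWith_smul (β := E) (τ : ℝ)).comp hlip
    rwa [NNReal.nnnorm_eq] at this
  have hdet : EqOn (fun x => (1 + fderiv ℝ ((τ : ℝ) • h) x).det)
      (fun x => (1 + (τ : ℝ) • fderiv ℝ h x).det) U := fun x hx => by
    simp only [fderiv_const_smul (hd.differentiableAt (hU.mem_nhds hx))]
  refine ⟨(integrableOn_det_one_add_fderiv hμU hlip_smul).congr_fun hdet hU.measurableSet, ?_⟩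
  rw [← setIntegral_congr_fun hU.measurableSet hdet]
  exact integral_det_one_add_fderiv_of_lt_one hU hτ hlip_smul (hd.const_smul _)
    fun x hx => by simp [h0 x hx]

theorem integral_det_one_add_fderiv (hU : IsOpen U) (hμU : μ U ≠ ∞) (hlip : LipschitzWith C h)
    (hd : DifferentiableOn ℝ h U) (h0 : ∀ x ∉ U, h x = 0) :
    ∫ x in U, (1 + fderiv ℝ h x).det ∂μ = μ.real U := by
  obtain ⟨s, hs, hcard⟩ := (Ioo_infinite (show (0 : ℝ≥0) < (C + 1)⁻¹ by positivity))
    |>.image (NNReal.coe_injective.injOn) |>.exists_subset_card_eq (Module.finrank ℝ E + 1)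
  obtain ⟨c, hc⟩ := exists_det_one_add_eq_sum (V := E) (s := s) (by lia)
  have hsmall : ∀ τ ∈ s, IntegrableOn (fun x => (1 + τ • fderiv ℝ h x).det) U μ ∧
      ∫ x in U, (1 + τ • fderiv ℝ h x).det ∂μ = μ.real U := by
    intro τ' hτ'
    obtain ⟨τ, hτ, rfl⟩ := hs hτ'
    refine integrableOn_and_integral_det_one_add_smul_fderiv ?_ hU hμU hlip hd h0
    calc τ * C ≤ τ * (C + 1) := by gcongr; simp
      _ < 1 := (lt_inv_mul_iff₀' (by positivity)).1 (by simpa using hτ.2)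
  calc ∫ x in U, (1 + fderiv ℝ h x).det ∂μ
      = ∫ x in U, ∑ τ ∈ s, c τ * (1 + τ • fderiv ℝ h x).det ∂μ :=
        integral_congr_ae (ae_of_all _ fun x => hc (fderiv ℝ h x))
    _ = ∑ τ ∈ s, c τ * ∫ x in U, (1 + τ • fderiv ℝ h x).det ∂μ := by
        rw [integral_finsetSum _ fun τ hτ => (hsmall τ hτ).1.const_mul (c τ)]
        simp only [integral_const_mul]
    _ = (∑ τ ∈ s, c τ) * μ.real U := by
        rw [Finset.sum_mul]
        exact Finset.sum_congr rfl fun τ hτ => by rw [(hsmall τ hτ).2]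
    _ = μ.real U := by
        have hsum : 1 = ∑ τ ∈ s, c τ := by simpa using hc 0
        rw [← hsum, one_mul]

end VolumeIdentity

section Brouwer

theorem inter_frontier_nonempty_of_isPreconnected {X : Type*} [TopologicalSpace X] {s t : Set X}
    (ht : IsPreconnected t) (hs : (t ∩ s).Nonempty) (hsc : (t ∩ sᶜ).Nonempty) :
    (t ∩ frontier s).Nonempty := by
  rw [frontier_eq_closure_inter_closure]
  refine isPreconnected_closed_iff.1 ht _ _ isClosed_closure isClosed_closure (fun x _ => ?_)
    (hs.mono (inter_subset_inter_right t subset_closure))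
    (hsc.mono (inter_subset_inter_right t subset_closure))
  exact (em (x ∈ s)).imp (fun hx => subset_closure hx) (fun hx => subset_closure hx)

theorem lipschitzWith_indicator_of_eqOn_zero_frontier {E F : Type*} [NormedAddCommGroup E]
    [NormedSpace ℝ E] [SeminormedAddCommGroup F] {s : Set E} {f : E → F} {C : ℝ≥0}
    (hs : IsClosed s) (hlip : LipschitzOnWith C f s) (h0 : EqOn f 0 (frontier s)) :
    LipschitzWith C (s.indicator f) := by
  have hcross : ∀ x ∈ s, ∀ y ∉ s, ‖f x‖ ≤ C * dist x y := by
    intro x hx y hy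
    obtain ⟨z, hz, hzs⟩ := inter_frontier_nonempty_of_isPreconnected
      (convex_segment (𝕜 := ℝ) x y).isPreconnected ⟨x, left_mem_segment ℝ x y, hx⟩
      ⟨y, right_mem_segment ℝ x y, hy⟩
    calc ‖f x‖ = dist (f x) (f z) := by rw [h0 hzs, Pi.zero_apply, dist_zero_right]
      _ ≤ C * dist x z := hlip.dist_le_mul x hx z (hs.frontier_subset hzs)
      _ ≤ C * dist x y := by
        rw [← dist_add_dist_of_mem_segment hz]
        gcongr
        exact le_add_of_nonneg_right dist_nonneg
  refine LipschitzWith.of_dist_le_mul fun x y => ?_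
  by_cases hx : x ∈ s <;> by_cases hy : y ∈ s
  · simpa [hx, hy] using hlip.dist_le_mul x hx y hy
  · simpa [hx, hy] using hcross x hx y hy
  · simpa [hx, hy, dist_comm] using hcross y hy x hx
  · simp only [indicator_of_notMem hx, indicator_of_notMem hy, dist_self]
    positivity

variable {E : Type*} [NormedAddCommGroup E] [InnerProductSpace ℝ E]

-- The image of `r` near `x` lies on a sphere, so the derivative at `x` misses the normal `r x`.
theorem det_eq_zero_of_hasFDerivAt_of_norm_eq [FiniteDimensional ℝ E] {r : E → E} {r' : E →L[ℝ] E}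
    {x : E} {c : ℝ} (hr : HasFDerivAt r r' x) (hc : c ≠ 0) (hnorm : ∀ᶠ y in 𝓝 x, ‖r y‖ = c) :
    r'.det = 0 := by
  have horth : ∀ v, ⟪r x, r' v⟫ = 0 := by
    intro v
    have hconst : HasFDerivAt (fun y => ‖r y‖ ^ 2) (0 : E →L[ℝ] ℝ) x :=
      (hasFDerivAt_const (c ^ 2) x).congr_of_eventuallyEq (hnorm.mono fun y hy => by simp only [hy])
    simpa using DFunLike.congr_fun (hr.norm_sq.unique hconst) v
  by_contra hdet
  obtain ⟨v, hv⟩ := (r'.toContinuousLinearEquivOfDetNeZero hdet).surjective (r x)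
  have hrx : r x = 0 := by
    rw [← inner_self_eq_zero (𝕜 := ℝ)]
    nth_rewrite 2 [← hv]
    exact horth v
  exact hc (by rw [← hnorm.self_of_nhds, hrx, norm_zero])

theorem not_mapsTo_sphere_of_eqOn_id [FiniteDimensional ℝ E] {r : E → E} {C : ℝ≥0}
    (hlip : LipschitzOnWith C r (closedBall 0 1)) (hd : DifferentiableOn ℝ r (ball 0 1))
    (hid : EqOn r id (sphere 0 1)) : ¬MapsTo r (closedBall 0 1) (sphere 0 1) := by
  intro hmaps
  let _ : MeasurableSpace E := borel E
  have _ : BorelSpace E := ⟨rfl⟩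
  let h : E → E := (closedBall 0 1).indicator (r - id)
  have hh : ∀ x ∈ ball (0 : E) 1, HasFDerivAt h (fderiv ℝ r x - 1) x := by
    intro x hx
    refine (((hd.differentiableAt (isOpen_ball.mem_nhds hx)).hasFDerivAt).sub
      (hasFDerivAt_id x)).congr_of_eventuallyEq ?_
    filter_upwards [isOpen_ball.mem_nhds hx] with y hy
    exact indicator_of_mem (ball_subset_closedBall hy) _
  have hlip_h : LipschitzWith (C + 1) h :=
    lipschitzWith_indicator_of_eqOn_zero_frontier isClosed_closedBall
      (hlip.sub LipschitzWith.id.lipschitzOnWith) fun x hx => by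
        simp [hid (frontier_closedBall_subset_sphere hx)]
  have hzero : ∀ x ∉ ball (0 : E) 1, h x = 0 := by
    intro x hx
    by_cases hxc : x ∈ closedBall (0 : E) 1
    · have hxs : x ∈ sphere (0 : E) 1 := by
        rw [← closedBall_sdiff_ball]
        exact ⟨hxc, hx⟩
      simp [h, hid hxs]
    · exact indicator_of_notMem hxc _
  have hvol := integral_det_one_add_fderiv (μ := (volume : Measure E)) isOpen_ball
    measure_ball_lt_top.ne hlip_h
    (fun x hx => (hh x hx).differentiableAt.differentiableWithinAt) hzero
  have hdet : ∀ x ∈ ball (0 : E) 1, (1 + fderiv ℝ h x).det = 0 := by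
    intro x hx
    rw [(hh x hx).fderiv, add_sub_cancel]
    refine det_eq_zero_of_hasFDerivAt_of_norm_eq
      (hd.differentiableAt (isOpen_ball.mem_nhds hx)).hasFDerivAt one_ne_zero ?_
    filter_upwards [isOpen_ball.mem_nhds hx] with y hy
    simpa using hmaps (ball_subset_closedBall hy)
  rw [setIntegral_congr_fun measurableSet_ball hdet, integral_zero] at hvol
  exact (ENNReal.toReal_pos (measure_ball_pos volume (0 : E) one_pos).ne'
    measure_ball_lt_top.ne).ne hvol

/-- The larger root `l` of `‖x + l • w‖ = 1`: the time at which the ray from the point `x` of the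
unit ball in the direction `w ≠ 0` leaves that ball. -/
noncomputable def sphereExit (x w : E) : ℝ :=
  (-⟪x, w⟫ + √(⟪x, w⟫ ^ 2 + ‖w‖ ^ 2 * (1 - ‖x‖ ^ 2))) / ‖w‖ ^ 2

theorem norm_add_sphereExit_smul {x w : E} (hx : ‖x‖ ≤ 1) (hw : w ≠ 0) :
    ‖x + sphereExit x w • w‖ = 1 := by
  have hw2 : ‖w‖ ^ 2 ≠ 0 := by simpa using hw
  have hx2 : 0 ≤ 1 - ‖x‖ ^ 2 := sub_nonneg.2 (pow_le_one₀ (norm_nonneg x) hx)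
  have hroot : (sphereExit x w * ‖w‖ ^ 2 + ⟪x, w⟫) ^ 2
      = ⟪x, w⟫ ^ 2 + ‖w‖ ^ 2 * (1 - ‖x‖ ^ 2) := by
    rw [sphereExit, div_mul_cancel₀ _ hw2, neg_add_cancel_comm, Real.sq_sqrt (by positivity)]
  rw [← sq_eq_sq₀ (norm_nonneg _) zero_le_one, norm_add_sq_real, inner_smul_right, norm_smul,
    mul_pow, Real.norm_eq_abs, sq_abs]
  refine mul_left_cancel₀ hw2 ?_
  linear_combination hroot

theorem sphereExit_eq_zero {x w : E} (hx : ‖x‖ = 1) (hxw : 0 ≤ ⟪x, w⟫) : sphereExit x w = 0 := by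
  simp [sphereExit, hx, Real.sqrt_sq hxw]

theorem contDiffAt_sphereExit {x w : E} {n : WithTop ℕ∞} (hx : ‖x‖ ≤ 1) (hw : w ≠ 0)
    (hxw : ‖x‖ = 1 → ⟪x, w⟫ ≠ 0) :
    ContDiffAt ℝ n (fun p : E × E => sphereExit p.1 p.2) (x, w) := by
  have hdisc : 0 < ⟪x, w⟫ ^ 2 + ‖w‖ ^ 2 * (1 - ‖x‖ ^ 2) := by
    rcases hx.lt_or_eq with hlt | heq
    · have : 0 < 1 - ‖x‖ ^ 2 := sub_pos.2 (pow_lt_one₀ (norm_nonneg x) hlt two_ne_zero)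
      positivity
    · have := hxw heq
      rw [heq]
      positivity
  have hinner : ContDiffAt ℝ n (fun p : E × E => ⟪p.1, p.2⟫) (x, w) :=
    contDiffAt_fst.inner ℝ contDiffAt_snd
  have hfst : ContDiffAt ℝ n (fun p : E × E => ‖p.1‖ ^ 2) (x, w) := contDiffAt_fst.norm_sq ℝ
  have hsnd : ContDiffAt ℝ n (fun p : E × E => ‖p.2‖ ^ 2) (x, w) := contDiffAt_snd.norm_sq ℝ
  exact (hinner.neg.add (((hinner.pow 2).add (hsnd.mul (contDiffAt_const.sub hfst))).sqrt
    hdisc.ne')).div hsnd (by simpa using hw)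

theorem exists_fixedPoint_of_contDiff [FiniteDimensional ℝ E] {f : E → E} (hf : ContDiff ℝ 1 f)
    (hlt : ∀ x, ‖f x‖ < 1) : ∃ x ∈ closedBall (0 : E) 1, f x = x := by
  by_contra! hne
  let r : E → E := fun x => x + sphereExit x (x - f x) • (x - f x)
  have hmaps : MapsTo r (closedBall 0 1) (sphere 0 1) := fun x hx =>
    mem_sphere_zero_iff_norm.2 <| norm_add_sphereExit_smul (mem_closedBall_zero_iff.1 hx)
      (sub_ne_zero.2 (hne x hx).symm)
  have hinner : ∀ x, ‖x‖ = 1 → 0 < ⟪x, x - f x⟫ := by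
    intro x hx
    rw [inner_sub_right, real_inner_self_eq_norm_sq, hx, one_pow, sub_pos]
    calc ⟪x, f x⟫ ≤ ‖x‖ * ‖f x‖ := real_inner_le_norm x (f x)
      _ < 1 := by rw [hx, one_mul]; exact hlt x
  have hid : EqOn r id (sphere 0 1) := by
    intro x hx
    have hx : ‖x‖ = 1 := mem_sphere_zero_iff_norm.1 hx
    simp [r, sphereExit_eq_zero hx (hinner x hx).le]
  have hw : ContDiff ℝ 1 fun x => x - f x := contDiff_id.sub hf
  have hr : ContDiffOn ℝ 1 r (closedBall 0 1) := by
    intro x hx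
    have hexit := contDiffAt_sphereExit (n := 1) (mem_closedBall_zero_iff.1 hx)
      (sub_ne_zero.2 (hne x hx).symm) fun hx => (hinner x hx).ne'
    exact (contDiffAt_id.add ((hexit.comp x (contDiff_id.prodMk hw).contDiffAt).smul
      hw.contDiffAt)).contDiffWithinAt
  obtain ⟨C, hlip⟩ := hr.exists_lipschitzOnWith one_ne_zero (convex_closedBall 0 1)
    (isCompact_closedBall 0 1)
  exact not_mapsTo_sphere_of_eqOn_id hlip
    ((hr.differentiableOn one_ne_zero).mono ball_subset_closedBall) hid hmaps

theorem exists_fixedPoint_of_forall_dist_le {X : Type*} [MetricSpace X] {f : X → X} {C Q : Set X}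
    (hQ : IsCompact Q) (hQC : Q ⊆ C) (hf : ContinuousOn f C) (hmaps : MapsTo f C Q)
    (happrox : ∀ ε > 0, ∃ x ∈ C, dist (f x) x ≤ ε) : ∃ x ∈ C, f x = x := by
  choose x hxC hx using fun n : ℕ => happrox (1 / ((n : ℝ) + 1)) Nat.one_div_pos_of_nat
  obtain ⟨z, hzQ, φ, hφ, hfx⟩ := hQ.tendsto_subseq fun n => hmaps (hxC n)
  have hdist : Tendsto (fun n => dist (f (x n)) (x n)) atTop (𝓝 0) :=
    squeeze_zero (fun _ => dist_nonneg) hx tendsto_one_div_add_atTop_nhds_zero_nat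
  have hxz : Tendsto (x ∘ φ) atTop (𝓝 z) :=
    hfx.congr_dist (hdist.comp hφ.tendsto_atTop)
  refine ⟨z, hQC hzQ, tendsto_nhds_unique ((hf z (hQC hzQ)).tendsto.comp ?_) hfx⟩
  exact tendsto_nhdsWithin_iff.2 ⟨hxz, Eventually.of_forall fun n => hxC (φ n)⟩

theorem exists_fixedPoint_of_norm_le_one [FiniteDimensional ℝ E] {f : E → E} (hf : Continuous f)
    (hle : ∀ x, ‖f x‖ ≤ 1) : ∃ x, f x = x := by
  have happrox : ∀ ε > 0, ∃ x ∈ (univ : Set E), dist (f x) x ≤ ε := by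
    intro ε hε
    obtain ⟨g, hg, hgf, -⟩ := hf.exists_contDiff_approx 1 (ε := fun _ => ε / 2)
      continuous_const fun _ => half_pos hε
    have hpos : 0 < 1 + ε / 2 := by positivity
    have hglt : ∀ x, ‖(1 + ε / 2)⁻¹ • g x‖ < 1 := by
      intro x
      rw [norm_smul, norm_inv, Real.norm_of_nonneg hpos.le, inv_mul_lt_one₀ hpos]
      calc ‖g x‖ ≤ ‖f x‖ + dist (g x) (f x) := by
            rw [dist_eq_norm]
            exact norm_le_norm_add_norm_sub' _ _
        _ < 1 + ε / 2 := add_lt_add_of_le_of_lt (hle x) (hgf x)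
    obtain ⟨x, hx, hfix⟩ := exists_fixedPoint_of_contDiff (contDiff_const.smul hg) hglt
    have hgx : dist (g x) x ≤ ε / 2 := by
      have : g x - x = (ε / 2) • x := by
        rw [(inv_smul_eq_iff₀ hpos.ne').1 hfix, add_smul, one_smul, add_sub_cancel_left]
      rw [dist_eq_norm, this, norm_smul, Real.norm_of_nonneg (by positivity)]
      exact mul_le_of_le_one_right (by positivity) (mem_closedBall_zero_iff.1 hx)
    refine ⟨x, mem_univ x, (dist_triangle_left (f x) x (g x)).trans ?_⟩
    linarith [hgf x]
  obtain ⟨x, -, hx⟩ := exists_fixedPoint_of_forall_dist_le (isCompact_closedBall 0 1)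
    (subset_univ _) hf.continuousOn (fun x _ => mem_closedBall_zero_iff.2 (hle x)) happrox
  exact ⟨x, hx⟩

-- The retraction is the metric projection, which is nonexpansive because `u - p u` makes an obtuse
-- angle with `w - p u` for every `w ∈ K`.
theorem exists_lipschitzWith_one_retraction {K : Set E} (hne : K.Nonempty) (hK : IsComplete K)
    (hconv : Convex ℝ K) :
    ∃ p : E → E, LipschitzWith 1 p ∧ (∀ u, p u ∈ K) ∧ EqOn p id K := by
  choose p hpK hpmin using exists_norm_eq_iInf_of_complete_convex hne hK hconv
  have hobtuse : ∀ u, ∀ w ∈ K, ⟪u - p u, w - p u⟫ ≤ 0 := fun u =>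
    (norm_eq_iInf_iff_real_inner_le_zero hconv (hpK u)).1 (hpmin u)
  refine ⟨p, LipschitzWith.mk_one fun u v => ?_, hpK, fun u hu => ?_⟩
  · have hsq : ‖p u - p v‖ * ‖p u - p v‖ ≤ ‖u - v‖ * ‖p u - p v‖ := by
      calc ‖p u - p v‖ * ‖p u - p v‖
          = ⟪u - v, p u - p v⟫ + ⟪u - p u, p v - p u⟫ + ⟪v - p v, p u - p v⟫ := by
            rw [← real_inner_self_eq_norm_mul_norm]
            simp only [inner_sub_left, inner_sub_right]
            ring
        _ ≤ ⟪u - v, p u - p v⟫ := by linarith [hobtuse u (p v) (hpK v), hobtuse v (p u) (hpK u)]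
        _ ≤ ‖u - v‖ * ‖p u - p v‖ := real_inner_le_norm _ _
    rw [dist_eq_norm, dist_eq_norm]
    rcases (norm_nonneg (p u - p v)).eq_or_lt with h0 | hpos
    · exact h0 ▸ norm_nonneg _
    · exact le_of_mul_le_mul_right hsq hpos
  · exact (sub_eq_zero.1 (real_inner_self_nonpos.1 (hobtuse u u hu))).symm

theorem exists_fixedPoint_of_isCompact_convex_inner [FiniteDimensional ℝ E] {K : Set E} {f : E → E}
    (hne : K.Nonempty) (hK : IsCompact K) (hconv : Convex ℝ K) (hf : ContinuousOn f K)
    (hmaps : MapsTo f K K) : ∃ x ∈ K, f x = x := by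
  obtain ⟨p, hp, hpK, hpid⟩ := exists_lipschitzWith_one_retraction hne hK.isComplete hconv
  obtain ⟨R, hR, hKR⟩ := hK.isBounded.exists_pos_norm_le
  obtain ⟨y, hy⟩ := exists_fixedPoint_of_norm_le_one (f := fun y => R⁻¹ • f (p (R • y)))
    (continuous_const.smul (hf.comp_continuous (hp.continuous.comp (continuous_const_smul R))
      fun _ => hpK _)) fun y => by
        rw [norm_smul, norm_inv, Real.norm_of_nonneg hR.le, inv_mul_le_one₀ hR]
        exact hKR _ (hmaps (hpK _))
  have hfix : f (p (R • y)) = R • y := (inv_smul_eq_iff₀ hR.ne').1 hy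
  have hyK : R • y ∈ K := hfix ▸ hmaps (hpK _)
  exact ⟨R • y, hyK, by rwa [hpid hyK] at hfix⟩

theorem exists_fixedPoint_of_isCompact_convex {V : Type*} [NormedAddCommGroup V] [NormedSpace ℝ V]
    [FiniteDimensional ℝ V] {K : Set V} {f : V → V} (hne : K.Nonempty) (hK : IsCompact K)
    (hconv : Convex ℝ K) (hf : ContinuousOn f K) (hmaps : MapsTo f K K) : ∃ x ∈ K, f x = x := by
  let e := toEuclidean (E := V)
  have hsymm : MapsTo e.symm (e '' K) K := by
    rintro _ ⟨x, hx, rfl⟩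
    rwa [e.symm_apply_apply]
  obtain ⟨_, ⟨x, hx, rfl⟩, hfix⟩ := exists_fixedPoint_of_isCompact_convex_inner
    (f := e ∘ f ∘ e.symm) (hne.image e) (hK.image e.continuous)
    (hconv.linear_image e.toLinearEquiv.toLinearMap)
    (e.continuous.comp_continuousOn (hf.comp e.symm.continuous.continuousOn hsymm))
    fun y hy => mem_image_of_mem e (hmaps (hsymm hy))
  exact ⟨x, hx, by simpa using hfix⟩

end Brouwer

section Schauder

variable {X : Type*} [NormedAddCommGroup X] [NormedSpace ℝ X] {C Q : Set X} {f : X → X}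

theorem exists_dist_le_of_mapsTo_isCompact (hne : C.Nonempty) (hC : Convex ℝ C)
    (hQ : IsCompact Q) (hQC : Q ⊆ C) (hf : ContinuousOn f C) (hmaps : MapsTo f C Q) {ε : ℝ}
    (hε : 0 < ε) : ∃ x ∈ C, dist (f x) x ≤ ε := by
  obtain ⟨S, hSQ, hSfin, hcover⟩ := hQ.finite_cover_balls hε
  have := hSfin.fintype
  obtain ⟨ρ, hρ⟩ := PartitionOfUnity.exists_isSubordinate hQ.isClosed
    (fun i : S => ball (i : X) ε) (fun _ => isOpen_ball) (by rwa [iUnion_coe_set])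
  let P : (S → ℝ) → X := fun z => ∑ i, z i • (i : X)
  have hPC : MapsTo P (stdSimplex ℝ S) C := fun z hz =>
    hC.sum_mem (fun i _ => hz.1 i) hz.2 fun i _ => hQC (hSQ i.2)
  have hPcont : Continuous P := by fun_prop
  have hρmem : ∀ y ∈ Q, (fun i => ρ i y) ∈ stdSimplex ℝ S := fun y hy =>
    ⟨fun i => ρ.nonneg i y, by rw [← finsum_eq_sum_of_fintype, ρ.sum_eq_one hy]⟩
  have hPρ : ∀ y ∈ Q, dist y (P fun i => ρ i y) ≤ ε := by
    intro y hy
    have hP : P (fun i => ρ i y) = ∑ᶠ i, ρ i y • (i : X) := (finsum_eq_sum_of_fintype _).symm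
    rw [dist_comm, ← mem_closedBall, hP]
    refine ρ.finsum_smul_mem_convex (g := fun i _ => (i : X)) hy (fun i hi => ?_)
      (convex_closedBall y ε)
    exact ball_subset_closedBall (mem_ball_comm.1 (hρ i (subset_closure hi)))
  have hfP : MapsTo (f ∘ P) (stdSimplex ℝ S) Q := hmaps.comp hPC
  obtain ⟨x₀, hx₀⟩ := hne
  obtain ⟨z, hz, hfix⟩ := exists_fixedPoint_of_isCompact_convex
    (f := fun z i => ρ i (f (P z))) ⟨_, hρmem _ (hmaps hx₀)⟩ (isCompact_stdSimplex ℝ S)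
    (convex_stdSimplex ℝ S)
    (continuousOn_pi.2 fun i => (ρ i).continuous.comp_continuousOn
      (hf.comp hPcont.continuousOn hPC))
    fun z hz => hρmem _ (hfP hz)
  refine ⟨P z, hPC hz, ?_⟩
  have hdist := hPρ (f (P z)) (hfP hz)
  rwa [hfix] at hdist

theorem schauder_fixedPoint (hne : C.Nonempty) (hC : Convex ℝ C) (hQ : IsCompact Q) (hQC : Q ⊆ C)
    (hf : ContinuousOn f C) (hmaps : MapsTo f C Q) : ∃ x ∈ C, f x = x :=
  exists_fixedPoint_of_forall_dist_le hQ hQC hf hmaps fun _ =>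
    exists_dist_le_of_mapsTo_isCompact hne hC hQ hQC hf hmaps

end Schauder

section LeraySchauder

variable {X V : Type*} [NormedAddCommGroup X] [NormedSpace ℝ X] [NormedAddCommGroup V]
  [NormedSpace ℝ V] {R : ℝ} {v : V}

/-- The radial retraction of a normed space onto its closed ball of radius `R > 0` about `0`. -/
noncomputable def ballRetraction (R : ℝ) (v : V) : V :=
  (R / max R ‖v‖) • v

theorem continuous_ballRetraction (hR : 0 < R) : Continuous (ballRetraction R : V → V) :=
  (continuous_const.div (by fun_prop) fun _ => (lt_max_of_lt_left hR).ne').smul continuous_id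

theorem ballRetraction_of_norm_le (hR : 0 < R) (hv : ‖v‖ ≤ R) : ballRetraction R v = v := by
  rw [ballRetraction, max_eq_left hv, div_self hR.ne', one_smul]

theorem ballRetraction_of_le_norm (hv : R ≤ ‖v‖) : ballRetraction R v = (R / ‖v‖) • v := by
  rw [ballRetraction, max_eq_right hv]

theorem norm_ballRetraction_of_le_norm (hR : 0 < R) (hv : R ≤ ‖v‖) : ‖ballRetraction R v‖ = R := by
  have hpos : 0 < ‖v‖ := hR.trans_le hv
  rw [ballRetraction_of_le_norm hv, norm_smul, Real.norm_of_nonneg (by positivity),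
    div_mul_cancel₀ _ hpos.ne']

theorem ballRetraction_mem_closedBall (hR : 0 < R) (v : V) :
    ballRetraction R v ∈ closedBall (0 : V) R := by
  rw [mem_closedBall_zero_iff]
  rcases le_total ‖v‖ R with hv | hv
  · rwa [ballRetraction_of_norm_le hR hv]
  · exact (norm_ballRetraction_of_le_norm hR hv).le

theorem exists_fixedPoint_of_leraySchauder_boundary {C : Set X} {Q : Set (X × V)}
    {g : X × V → X × V} (hne : C.Nonempty) (hC : Convex ℝ C) (hR : 0 < R) (hQ : IsCompact Q)
    (hQC : Q ⊆ C ×ˢ univ) (hg : ContinuousOn g (C ×ˢ closedBall 0 R))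
    (hmaps : MapsTo g (C ×ˢ closedBall 0 R) Q)
    (hLS : ∀ u ∈ C, ∀ v : V, ‖v‖ = R → ∀ lam ∈ Ioo (0 : ℝ) 1, v ≠ lam • (g (u, v)).2) :
    ∃ p ∈ C ×ˢ closedBall (0 : V) R, g p = p := by
  have hretr : MapsTo (Prod.map id (ballRetraction R)) (C ×ˢ (univ : Set V))
      (C ×ˢ closedBall 0 R) :=
    fun p hp => ⟨hp.1, ballRetraction_mem_closedBall hR p.2⟩
  obtain ⟨⟨u, v⟩, hp, hfix⟩ := schauder_fixedPoint (hne.prod univ_nonempty)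
    (hC.prod convex_univ) hQ hQC
    (hg.comp (continuous_id.prodMap (continuous_ballRetraction hR)).continuousOn hretr)
    (hmaps.comp hretr)
  replace hfix : g (u, ballRetraction R v) = (u, v) := hfix
  have hv : ‖v‖ ≤ R := by
    by_contra! hlt
    have hpos : 0 < ‖v‖ := hR.trans hlt
    refine hLS u hp.1 (ballRetraction R v) (norm_ballRetraction_of_le_norm hR hlt.le) (R / ‖v‖)
      ⟨by positivity, (div_lt_one hpos).2 hlt⟩ ?_
    rw [hfix, ballRetraction_of_le_norm hlt.le]
  rw [ballRetraction_of_norm_le hR hv] at hfix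
  exact ⟨(u, v), ⟨hp.1, mem_closedBall_zero_iff.2 hv⟩, hfix⟩

end LeraySchauder

section CompletelyContinuous

/-- Complete continuity on `D`: continuous, and mapping bounded subsets of `D` to relatively compact
sets. -/
structure CompletelyContinuousOn {X Y : Type*} [PseudoMetricSpace X] [TopologicalSpace Y]
    (f : X → Y) (D : Set X) : Prop where
  continuousOn : ContinuousOn f D
  isCompact_closure_image : ∀ A ⊆ D, Bornology.IsBounded A → IsCompact (closure (f '' A))

theorem CompletelyContinuousOn.prodMk {X Y Z : Type*} [PseudoMetricSpace X] [TopologicalSpace Y]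
    [R1Space Y] [TopologicalSpace Z] [R1Space Z] {f : X → Y} {g : X → Z} {D : Set X}
    (hf : CompletelyContinuousOn f D) (hg : CompletelyContinuousOn g D) :
    CompletelyContinuousOn (fun x => (f x, g x)) D := by
  refine ⟨hf.continuousOn.prodMk hg.continuousOn, fun A hA hAb => ?_⟩
  refine ((hf.isCompact_closure_image A hA hAb).prod
    (hg.isCompact_closure_image A hA hAb)).closure_of_subset ?_
  rintro _ ⟨x, hx, rfl⟩
  exact ⟨subset_closure (mem_image_of_mem f hx), subset_closure (mem_image_of_mem g hx)⟩

end CompletelyContinuous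

section NehariScaling

theorem continuousOn_of_unique_zero {X Y Z : Type*} [TopologicalSpace X] [TopologicalSpace Y]
    [TopologicalSpace Z] [T2Space Z] {D : Set X} {K : Set Y} {G : X × Y → Z} {z : Z} {s : X → Y}
    (hK : IsCompact K) (hG : ContinuousOn G (D ×ˢ K)) (hs : MapsTo s D K)
    (hzero : ∀ x ∈ D, G (x, s x) = z) (huniq : ∀ x ∈ D, ∀ y ∈ K, G (x, y) = z → y = s x) :
    ContinuousOn s D := by
  intro x hx
  have hD : ∀ᶠ x' in 𝓝[D] x, x' ∈ D := self_mem_nhdsWithin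
  refine hK.tendsto_nhds_of_unique_mapClusterPt (hD.mono hs) fun y hy hcluster => ?_
  obtain ⟨U, hU, hUy⟩ := mapClusterPt_iff_ultrafilter.1 hcluster
  have hUD : ∀ᶠ x' in (U : Filter X), x' ∈ D := hU hD
  have hUx : Tendsto id (U : Filter X) (𝓝 x) := hU.trans nhdsWithin_le_nhds
  have hlim : Tendsto (fun x' => G (x', s x')) U (𝓝 (G (x, y))) :=
    (hG (x, y) ⟨hx, hy⟩).tendsto.comp (tendsto_nhdsWithin_iff.2
      ⟨hUx.prodMk_nhds hUy, hUD.mono fun x' hx' => ⟨hx', hs hx'⟩⟩)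
  have hconst : Tendsto (fun x' => G (x', s x')) U (𝓝 z) :=
    tendsto_const_nhds.congr' (hUD.mono fun x' hx' => (hzero x' hx').symm)
  exact huniq x hx y hy (tendsto_nhds_unique hlim hconst)

variable {X V : Type*} [NormedAddCommGroup X] [NormedSpace ℝ X] {K : Set X} {B : Set V}
  {T : X → V → X} {F : X → X → ℝ} {s : X → V → ℝ} {m M : ℝ} {u : X} {v : V}

/-- Condition (a2): for `u ∈ K \ {0}` and `v ∈ B`, the number `s u v` is the unique scale
`σ > 0` that puts `σ • u` on the Nehari set `{w | F (T w v) w = 0}`. -/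
structure IsNehariScaling (K : Set X) (B : Set V) (T : X → V → X) (F : X → X → ℝ)
    (s : X → V → ℝ) : Prop where
  pos : ∀ u ∈ K, u ≠ 0 → ∀ v ∈ B, 0 < s u v
  eq_zero : ∀ u ∈ K, u ≠ 0 → ∀ v ∈ B, F (T (s u v • u) v) (s u v • u) = 0
  unique : ∀ u ∈ K, u ≠ 0 → ∀ v ∈ B, ∀ σ, 0 < σ → F (T (σ • u) v) (σ • u) = 0 → σ = s u v

namespace IsNehariScaling

theorem smul_mul (hs : IsNehariScaling K B T F s) {c : ℝ} (hc : 0 < c) (hu : u ∈ K)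
    (hcu : c • u ∈ K) (hu0 : u ≠ 0) (hv : v ∈ B) : s (c • u) v * c = s u v := by
  have hcu0 : c • u ≠ 0 := smul_ne_zero hc.ne' hu0
  refine hs.unique u hu hu0 v hv _ (mul_pos (hs.pos _ hcu hcu0 v hv) hc) ?_
  rw [mul_smul]
  exact hs.eq_zero _ hcu hcu0 v hv

theorem mul_norm_mem_Icc (hs : IsNehariScaling K B T F s) (hK : ∀ c : ℝ, 0 < c → ∀ u ∈ K, c • u ∈ K)
    (hbound : ∀ u ∈ K, ‖u‖ = 1 → ∀ v ∈ B, s u v ∈ Icc m M) (hu : u ∈ K) (hu0 : u ≠ 0)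
    (hv : v ∈ B) : s u v * ‖u‖ ∈ Icc m M := by
  have hpos : 0 < ‖u‖⁻¹ := inv_pos.2 (norm_pos_iff.2 hu0)
  have hmem : ‖u‖⁻¹ • u ∈ K := hK _ hpos u hu
  have hnorm : s u v * ‖u‖ = s (‖u‖⁻¹ • u) v := by
    rw [← hs.smul_mul hpos hu hmem hu0 hv, mul_assoc, inv_mul_cancel₀ (norm_ne_zero_iff.2 hu0),
      mul_one]
  rw [hnorm]
  exact hbound _ hmem (norm_smul_inv_norm (𝕜 := ℝ) hu0) v hv

-- `s u v * ‖u‖` is the unique zero of a continuous equation in the compact interval `[m, M]`.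
theorem continuousOn [TopologicalSpace V] (hs : IsNehariScaling K B T F s)
    (hK : ∀ c : ℝ, 0 < c → ∀ u ∈ K, c • u ∈ K) (hm : 0 < m)
    (hbound : ∀ u ∈ K, ‖u‖ = 1 → ∀ v ∈ B, s u v ∈ Icc m M)
    (hT : ContinuousOn (fun p : X × V => T p.1 p.2) (K ×ˢ B))
    (hTK : ∀ u ∈ K, ∀ v ∈ B, T u v ∈ K)
    (hF : ContinuousOn (fun p : X × X => F p.1 p.2) (K ×ˢ K)) :
    ContinuousOn (fun p : X × V => s p.1 p.2) ((K \ {0}) ×ˢ B) := by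
  let w : (X × V) × ℝ → X := fun q => (q.2 / ‖q.1.1‖) • q.1.1
  have hpos : ∀ q ∈ ((K \ {0}) ×ˢ B) ×ˢ Icc m M, 0 < q.2 / ‖q.1.1‖ := fun q hq =>
    div_pos (hm.trans_le hq.2.1) (norm_pos_iff.2 hq.1.1.2)
  have hwK : ∀ q ∈ ((K \ {0}) ×ˢ B) ×ˢ Icc m M, w q ∈ K := fun q hq => hK _ (hpos q hq) _ hq.1.1.1
  have hw : ContinuousOn w (((K \ {0}) ×ˢ B) ×ˢ Icc m M) :=
    (continuousOn_snd.div (by fun_prop) fun q hq => norm_ne_zero_iff.2 hq.1.1.2).smul (by fun_prop)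
  have hTw : ContinuousOn (fun q => T (w q) q.1.2) (((K \ {0}) ×ˢ B) ×ˢ Icc m M) :=
    hT.comp (hw.prodMk (by fun_prop)) fun q hq => ⟨hwK q hq, hq.1.2⟩
  have hG : ContinuousOn (fun q => F (T (w q) q.1.2) (w q)) (((K \ {0}) ×ˢ B) ×ˢ Icc m M) :=
    hF.comp (hTw.prodMk hw) fun q hq => ⟨hTK _ (hwK q hq) _ hq.1.2, hwK q hq⟩
  have hcont : ContinuousOn (fun p : X × V => s p.1 p.2 * ‖p.1‖) ((K \ {0}) ×ˢ B) := by
    refine continuousOn_of_unique_zero (z := 0) isCompact_Icc hG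
      (fun p hp => hs.mul_norm_mem_Icc hK hbound hp.1.1 hp.1.2 hp.2) (fun p hp => ?_)
      fun p hp τ hτ hzero => ?_
    · simp only [w, mul_div_cancel_right₀ _ (norm_ne_zero_iff.2 hp.1.2)]
      exact hs.eq_zero _ hp.1.1 hp.1.2 _ hp.2
    · rw [← div_eq_iff (norm_ne_zero_iff.2 hp.1.2)]
      exact hs.unique _ hp.1.1 hp.1.2 _ hp.2 _ (hpos (p, τ) ⟨hp, hτ⟩) hzero
  exact (hcont.div continuousOn_fst.norm fun p hp => norm_ne_zero_iff.2 hp.1.2).congr fun p hp =>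
    (mul_div_cancel_right₀ _ (norm_ne_zero_iff.2 hp.1.2)).symm

end IsNehariScaling

/-- The retraction `(u, v) ↦ min (1, s(u, v)) u` that pulls `u` back to the Nehari set if it lies
beyond it, and fixes `u` otherwise. -/
noncomputable def nehariShrink (s : X → V → ℝ) (p : X × V) : X :=
  min 1 (s p.1 p.2) • p.1

theorem nehariShrink_zero : nehariShrink s (0, v) = 0 :=
  smul_zero _

theorem nehariShrink_mem (hs : IsNehariScaling K B T F s)
    (hK : ∀ c : ℝ, 0 < c → ∀ u ∈ K, c • u ∈ K) (hu : u ∈ K) (hv : v ∈ B) :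
    nehariShrink s (u, v) ∈ K := by
  rcases eq_or_ne u 0 with rfl | hu0
  · rwa [nehariShrink_zero]
  · exact hK _ (lt_min one_pos (hs.pos u hu hu0 v hv)) u hu

theorem norm_nehariShrink (hs : IsNehariScaling K B T F s) (hu : u ∈ K) (hv : v ∈ B) :
    ‖nehariShrink s (u, v)‖ = min ‖u‖ (s u v * ‖u‖) := by
  rcases eq_or_ne u 0 with rfl | hu0
  · simp [nehariShrink_zero]
  · rw [nehariShrink, norm_smul, Real.norm_of_nonneg (le_min zero_le_one (hs.pos u hu hu0 v hv).le),
      min_mul_of_nonneg _ _ (norm_nonneg u), one_mul]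

theorem norm_nehariShrink_le (hs : IsNehariScaling K B T F s)
    (hK : ∀ c : ℝ, 0 < c → ∀ u ∈ K, c • u ∈ K)
    (hbound : ∀ u ∈ K, ‖u‖ = 1 → ∀ v ∈ B, s u v ∈ Icc m M) (hu : u ∈ K) (hv : v ∈ B) :
    ‖nehariShrink s (u, v)‖ ≤ |M| := by
  rcases eq_or_ne u 0 with rfl | hu0
  · simp [nehariShrink_zero]
  · rw [norm_nehariShrink hs hu hv]
    exact (min_le_right _ _).trans
      ((hs.mul_norm_mem_Icc hK hbound hu hu0 hv).2.trans (le_abs_self M))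

theorem continuousOn_nehariShrink [TopologicalSpace V] (hs : IsNehariScaling K B T F s)
    (hscont : ContinuousOn (fun p : X × V => s p.1 p.2) ((K \ {0}) ×ˢ B)) :
    ContinuousOn (nehariShrink s) (K ×ˢ B) := by
  rintro ⟨u, v⟩ hp
  rcases eq_or_ne u 0 with rfl | hu0
  · rw [ContinuousWithinAt, nehariShrink_zero]
    refine squeeze_zero_norm' (a := fun p : X × V => ‖p.1‖) ?_ ?_
    · filter_upwards [self_mem_nhdsWithin] with p hp
      exact (norm_nehariShrink hs hp.1 hp.2).trans_le (min_le_left _ _)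
    · simpa using (continuous_fst.norm.continuousWithinAt (s := K ×ˢ B) (x := ((0 : X), v))).tendsto
  · have hs_at : ContinuousWithinAt (fun p : X × V => s p.1 p.2) (K ×ˢ B) (u, v) := by
      refine (hscont (u, v) ⟨⟨hp.1, hu0⟩, hp.2⟩).mono_of_mem_nhdsWithin ?_
      filter_upwards [self_mem_nhdsWithin, nhdsWithin_le_nhds
        (continuous_fst.continuousAt.eventually_ne hu0)] with p hp hp0
      exact ⟨⟨hp.1, hp0⟩, hp.2⟩
    exact (continuousWithinAt_const.min hs_at).smul continuousWithinAt_fst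

-- If `s u v < 1`, then `w = s u v • u` lies on the Nehari set and is mapped to `u`, a multiple of
-- `w` with factor `> 1`.
theorem nehariShrink_eq_of_map_eq (hs : IsNehariScaling K B T F s)
    (hK : ∀ c : ℝ, 0 < c → ∀ u ∈ K, c • u ∈ K)
    (hF : ∀ u ∈ K, u ≠ 0 → ∀ c : ℝ, 1 < c → F (c • u) u ≠ 0) (hu : u ∈ K) (hv : v ∈ B)
    (hT : T (nehariShrink s (u, v)) v = u) : nehariShrink s (u, v) = u := by
  rcases eq_or_ne u 0 with rfl | hu0
  · exact nehariShrink_zero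
  have hpos := hs.pos u hu hu0 v hv
  rcases le_or_gt 1 (s u v) with hle | hlt
  · rw [nehariShrink, min_eq_left hle, one_smul]
  · have hshrink : nehariShrink s (u, v) = s u v • u := by rw [nehariShrink, min_eq_right hlt.le]
    rw [hshrink] at hT
    have hzero := hs.eq_zero u hu hu0 v hv
    refine absurd ?_ (hF (s u v • u) (hK _ hpos u hu) (smul_ne_zero hpos.ne' hu0) (s u v)⁻¹
      ((one_lt_inv₀ hpos).2 hlt))
    rw [inv_smul_smul₀ hpos.ne']
    rwa [hT] at hzero

end NehariScaling

theorem nehari_schaefer_fixed_point_general {X₁ X₂ : Type*} [NormedAddCommGroup X₁]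
    [NormedSpace ℝ X₁] [NormedAddCommGroup X₂] [NormedSpace ℝ X₂] {K : Set X₁} {R m M : ℝ}
    {T₁ : X₁ → X₂ → X₁} {T₂ : X₁ → X₂ → X₂} {F : X₁ → X₁ → ℝ} {s : X₁ → X₂ → ℝ}
    (hne : K.Nonempty) (hclosed : IsClosed K) (hconv : Convex ℝ K)
    (hcone : ∀ c : ℝ, 0 < c → ∀ u ∈ K, c • u ∈ K) (hR : 0 < R)
    (hT₁K : ∀ u ∈ K, ∀ v ∈ closedBall (0 : X₂) R, T₁ u v ∈ K)
    (hT₁ : CompletelyContinuousOn (fun p : X₁ × X₂ => T₁ p.1 p.2) (K ×ˢ closedBall 0 R))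
    (hT₂ : CompletelyContinuousOn (fun p : X₁ × X₂ => T₂ p.1 p.2) (K ×ˢ closedBall 0 R))
    (hFcont : ContinuousOn (fun p : X₁ × X₁ => F p.1 p.2) (K ×ˢ K))
    (hF : ∀ u ∈ K, u ≠ 0 → ∀ c : ℝ, 1 < c → F (c • u) u ≠ 0)
    (hs : IsNehariScaling K (closedBall 0 R) T₁ F s) (hm : 0 < m)
    (hbound : ∀ u ∈ K, ‖u‖ = 1 → ∀ v ∈ closedBall (0 : X₂) R, s u v ∈ Icc m M)
    (hLS : ∀ u ∈ K, ∀ v : X₂, ‖v‖ = R → ∀ lam ∈ Ioo (0 : ℝ) 1, v ≠ lam • T₂ u v) :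
    ∃ u ∈ K, ∃ v ∈ closedBall (0 : X₂) R, T₁ u v = u ∧ T₂ u v = v := by
  let T : X₁ × X₂ → X₁ × X₂ := fun p => (T₁ p.1 p.2, T₂ p.1 p.2)
  have hT : CompletelyContinuousOn T (K ×ˢ closedBall 0 R) := hT₁.prodMk hT₂
  let A : Set (X₁ × X₂) := (K ∩ closedBall 0 |M|) ×ˢ closedBall 0 R
  have hAK : A ⊆ K ×ˢ closedBall 0 R := prod_mono_left inter_subset_left
  have hAb : Bornology.IsBounded A :=
    (isBounded_closedBall.subset inter_subset_right).prod isBounded_closedBall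
  have hshrinkA : MapsTo (fun p => (nehariShrink s p, p.2)) (K ×ˢ closedBall 0 R) A :=
    fun p hp => ⟨⟨nehariShrink_mem hs hcone hp.1 hp.2, mem_closedBall_zero_iff.2
      (norm_nehariShrink_le hs hcone hbound hp.1 hp.2)⟩, hp.2⟩
  have hshrink : ContinuousOn (nehariShrink s) (K ×ˢ closedBall 0 R) :=
    continuousOn_nehariShrink hs (hs.continuousOn hcone hm hbound hT₁.continuousOn hT₁K hFcont)
  have hTA : closure (T '' A) ⊆ K ×ˢ univ :=
    closure_minimal (image_subset_iff.2 fun p hp => ⟨hT₁K _ (hAK hp).1 _ hp.2, mem_univ _⟩)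
      (hclosed.prod isClosed_univ)
  obtain ⟨⟨u, v⟩, hp, hfix⟩ := exists_fixedPoint_of_leraySchauder_boundary hne hconv hR
    (hT.isCompact_closure_image A hAK hAb) hTA
    (hT.continuousOn.comp (hshrink.prodMk continuousOn_snd) fun p hp => hAK (hshrinkA hp))
    (fun p hp => subset_closure (mem_image_of_mem T (hshrinkA hp)))
    fun u hu v hv => hLS _ (nehariShrink_mem hs hcone hu (mem_closedBall_zero_iff.2 hv.le)) v hv
  obtain ⟨h₁, h₂⟩ : T₁ (nehariShrink s (u, v)) v = u ∧ T₂ (nehariShrink s (u, v)) v = v :=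
    Prod.mk.inj hfix
  have hu : nehariShrink s (u, v) = u := nehariShrink_eq_of_map_eq hs hcone hF hp.1 hp.2 h₁
  rw [hu] at h₁ h₂
  exact ⟨u, hp.1, v, hp.2, h₁, h₂⟩

theorem nehari_schaefer_fixed_point
    {X₁ X₂ : Type*}
    [NormedAddCommGroup X₁] [NormedSpace ℝ X₁] [CompleteSpace X₁]
    [NormedAddCommGroup X₂] [NormedSpace ℝ X₂] [CompleteSpace X₂]
    -- K₁ is a non-degenerate cone
    (K₁ : Set X₁) (hK₁closed : IsClosed K₁) (hK₁conv : Convex ℝ K₁)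
    (hK₁cone : ∀ lam : ℝ, 0 ≤ lam → ∀ u ∈ K₁, lam • u ∈ K₁)
    (hK₁nondeg : ∃ u ∈ K₁, u ≠ 0)
    -- the closed ball B_R of radius R > 0 centered at the origin of X₂
    (R : ℝ) (hR : 0 < R)
    -- T₁ : K₁ × X₂ → K₁ is completely continuous
    (T₁ : X₁ → X₂ → X₁)
    (hT₁maps : ∀ u ∈ K₁, ∀ v : X₂, T₁ u v ∈ K₁)
    (hT₁cont : ContinuousOn (fun p : X₁ × X₂ => T₁ p.1 p.2) (K₁ ×ˢ (Set.univ : Set X₂)))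
    (hT₁compact : ∀ A ⊆ K₁ ×ˢ (Set.univ : Set X₂), Bornology.IsBounded A →
      IsCompact (closure ((fun p : X₁ × X₂ => T₁ p.1 p.2) '' A)))
    -- T₂ : K₁ × B_R → X₂ is completely continuous
    (T₂ : X₁ → X₂ → X₂)
    (hT₂cont : ContinuousOn (fun p : X₁ × X₂ => T₂ p.1 p.2)
      (K₁ ×ˢ Metric.closedBall (0 : X₂) R))
    (hT₂compact : ∀ A ⊆ K₁ ×ˢ Metric.closedBall (0 : X₂) R, Bornology.IsBounded A →
      IsCompact (closure ((fun p : X₁ × X₂ => T₂ p.1 p.2) '' A)))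
    -- the functional 𝓕 : K₁ × K₁ → ℝ, continuous, with 𝓕(λu,u)=0 ↔ λ=1
    (F : X₁ → X₁ → ℝ)
    (hFcont : ContinuousOn (fun p : X₁ × X₁ => F p.1 p.2) (K₁ ×ˢ K₁))
    (hF : ∀ u ∈ K₁, u ≠ 0 → ∀ lam : ℝ, 0 < lam → (F (lam • u) u = 0 ↔ lam = 1))
    -- condition (a1): T₂(K₁ × B_R) is bounded in X₂
    (a1 : Bornology.IsBounded
      ((fun p : X₁ × X₂ => T₂ p.1 p.2) '' (K₁ ×ˢ Metric.closedBall (0 : X₂) R)))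
    -- condition (a2): s(u,v) is the unique positive zero
    (s : X₁ → X₂ → ℝ)
    (a2 : ∀ u ∈ K₁, u ≠ 0 → ∀ v ∈ Metric.closedBall (0 : X₂) R,
      0 < s u v ∧ F (T₁ (s u v • u) v) (s u v • u) = 0 ∧
      ∀ σ : ℝ, 0 < σ → F (T₁ (σ • u) v) (σ • u) = 0 → σ = s u v)
    -- condition (a3): m < s < M on the unit sphere of the cone, times B_R
    (m M : ℝ) (hm : 0 < m) (hmM : m < M)
    (a3 : ∀ u ∈ K₁, ‖u‖ = 1 → ∀ v ∈ Metric.closedBall (0 : X₂) R,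
      m < s u v ∧ s u v < M)
    -- the Leray–Schauder boundary condition
    (hLS : ∀ u ∈ K₁, ∀ v : X₂, ‖v‖ = R →
      ∀ lam : ℝ, 0 < lam → lam < 1 → v ≠ lam • T₂ u v) :
    ∃ u ∈ K₁, ∃ v ∈ Metric.closedBall (0 : X₂) R, T₁ u v = u ∧ T₂ u v = v :=
  nehari_schaefer_fixed_point_general (hK₁nondeg.imp fun _ h => h.1) hK₁closed hK₁conv
    (fun c hc => hK₁cone c hc.le) hR (fun u hu v _ => hT₁maps u hu v)
    ⟨hT₁cont.mono (prod_mono_right (subset_univ _)),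
      fun A hA => hT₁compact A (hA.trans (prod_mono_right (subset_univ _)))⟩
    ⟨hT₂cont, hT₂compact⟩ hFcont
    (fun u hu hu0 c hc h0 => hc.ne' ((hF u hu hu0 c (one_pos.trans hc)).1 h0))
    ⟨fun u hu hu0 v hv => (a2 u hu hu0 v hv).1, fun u hu hu0 v hv => (a2 u hu hu0 v hv).2.1,
      fun u hu hu0 v hv => (a2 u hu hu0 v hv).2.2⟩
    hm (fun u hu hu1 v hv => ⟨(a3 u hu hu1 v hv).1.le, (a3 u hu hu1 v hv).2.le⟩)
    fun u hu v hv lam hlam => hLS u hu v hv lam hlam.1 hlam.2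
end

section
/- Assume (H1) and the quantitative form of (H2): there exist c₂ with 0 < c₂ < 1/α₁ and δ₀ > 0 such that f(x,y) ≤ c₂·x for all 0 ≤ x ≤ δ₀ and all |y| ≤ R. Then for every u ∈ K₁ with |u|_∞ = 1, every v ∈ C([0,1],ℝ) with |v|_∞ ≤ R, and every σ with 0 < σ < δ₀, one has 𝓕(T₁(σu, v), σu) < 0. In particular, any σ > 0 satisfying 𝓕(T₁(σu, v), σu) = 0 satisfies σ ≥ δ₀. -/
/-!
STATEMENT 12: Assume (H1) and the quantitative form of (H2): there exist c₂ with
0 < c₂ < 1/α₁ and δ₀ > 0 such that f(x,y) ≤ c₂·x for all 0 ≤ x ≤ δ₀ and all |y| ≤ R.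
Then for every u ∈ K₁ with |u|_∞ = 1, every v ∈ C([0,1],ℝ) with |v|_∞ ≤ R, and every
σ with 0 < σ < δ₀, one has 𝓕(T₁(σu, v), σu) < 0.  In particular, any σ > 0 with
𝓕(T₁(σu, v), σu) = 0 satisfies σ ≥ δ₀.

Here 𝓕(ũ, u) = ∫₀¹ (ũ(t) − u(t))·u(t) dt and T₁(u,v)(t) = ∫₀¹ k₁(t,θ) f(u(θ),v(θ)) dθ.
Elements of C([0,1],ℝ) are modelled as functions ℝ → ℝ that are continuous on [0,1].
-/

/-- The sup norm on `[0,1]`: `|u|_∞ = max_{t ∈ [0,1]} |u t|`. -/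
noncomputable def supNorm (u : ℝ → ℝ) : ℝ :=
  sSup ((fun t => |u t|) '' Set.Icc (0:ℝ) 1)

/-- Membership in the cone
`K₁ = {u ∈ C([0,1],ℝ) : u ≥ 0 and min_{t∈[a,b]} u(t) ≥ c₁ |u|_∞}`. -/
def memK₁ (a b c₁ : ℝ) (u : ℝ → ℝ) : Prop :=
  ContinuousOn u (Set.Icc 0 1) ∧ (∀ t ∈ Set.Icc (0:ℝ) 1, 0 ≤ u t) ∧
    ∀ t ∈ Set.Icc a b, c₁ * supNorm u ≤ u t

/-- The value `𝓕(T₁(σu,v), σu)` where `𝓕(ũ,u) = ∫₀¹ (ũ(t) − u(t))·u(t) dt` and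
`T₁(u,v)(t) = ∫₀¹ k₁(t,θ) f(u(θ),v(θ)) dθ`. -/
noncomputable def nehariF (k₁ : ℝ → ℝ → ℝ) (f : ℝ → ℝ → ℝ) (u v : ℝ → ℝ) (σ : ℝ) : ℝ :=
  ∫ t in (0:ℝ)..1,
    ((∫ θ in (0:ℝ)..1, k₁ t θ * f (σ * u θ) (v θ)) - σ * u t) * (σ * u t)

/-!
Write `m = ∫ u`. As `f(u, v) ≤ c u` along the curve and the kernel is at most `κ`, the image
`T(u, v)` lies below the constant `κ c m`; hence `∫ T(u, v) u ≤ κ c m²`, whereas `m² ≤ ∫ u²` on a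
probability space. Thus `𝓕(T(u, v), u) ≤ (κ c - 1) m² < 0` as soon as `κ c < 1` and `u ≥ 0` has
positive mean.
-/

open MeasureTheory Set

section Nehari

variable {X Y : Type*} [MeasurableSpace X] {μ : Measure X} {u w : X → ℝ} {v : X → Y}
  {k : X → X → ℝ} {f : ℝ → Y → ℝ} {c q κ : ℝ}

/-- The Nehari-type functional `𝓕(w, u) = ∫ (w - u) u dμ`, over an arbitrary measure space. -/
noncomputable def nehari (μ : Measure X) (w u : X → ℝ) : ℝ :=
  ∫ t, (w t - u t) * u t ∂μ

/-- The Hammerstein integral operator `T(u, v)(t) = ∫ k(t, θ) f(u(θ), v(θ)) dμ(θ)`, over an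
arbitrary measure space and with values of `v` in an arbitrary type. -/
noncomputable def hammerstein (μ : Measure X) (k : X → X → ℝ) (f : ℝ → Y → ℝ) (u : X → ℝ)
    (v : X → Y) (t : X) : ℝ :=
  ∫ θ, k t θ * f (u θ) (v θ) ∂μ

theorem sq_integral_le_integral_sq [IsProbabilityMeasure μ] (hu : MemLp u 2 μ) :
    (∫ t, u t ∂μ) ^ 2 ≤ ∫ t, u t ^ 2 ∂μ := by
  have hvar := ProbabilityTheory.variance_nonneg u μ
  rw [ProbabilityTheory.variance_eq_sub hu] at hvar
  exact sub_nonneg.mp hvar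

theorem nehari_neg_of_le_mul_integral [IsProbabilityMeasure μ] (hu : MemLp u 2 μ)
    (hwu : Integrable (fun t => w t * u t) μ) (hu_nonneg : 0 ≤ᵐ[μ] u) (hu_pos : 0 < ∫ t, u t ∂μ)
    (hq : q < 1) (hw : ∀ᵐ t ∂μ, w t ≤ q * ∫ θ, u θ ∂μ) :
    nehari μ w u < 0 := by
  set m := ∫ t, u t ∂μ with hm
  have hwu_le : ∫ t, w t * u t ∂μ ≤ q * m * m := by
    rw [hm, ← integral_const_mul]
    refine integral_mono_ae hwu ((hu.integrable one_le_two).const_mul _) ?_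
    filter_upwards [hw, hu_nonneg] with t hwt hut
    exact mul_le_mul_of_nonneg_right hwt hut
  calc nehari μ w u = ∫ t, w t * u t ∂μ - ∫ t, u t ^ 2 ∂μ := by
        rw [← integral_sub hwu hu.integrable_sq]
        exact integral_congr_ae (.of_forall fun t => by ring)
    _ ≤ q * m * m - m ^ 2 := sub_le_sub hwu_le (sq_integral_le_integral_sq hu)
    _ = (q - 1) * m ^ 2 := by ring
    _ < 0 := mul_neg_of_neg_of_pos (sub_neg.mpr hq) (pow_pos hu_pos 2)

theorem hammerstein_le_mul_integral {t : X} (hu : Integrable u μ) (hκ : 0 ≤ κ)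
    (hk : ∀ᵐ θ ∂μ, k t θ ≤ κ) (hf : ∀ᵐ θ ∂μ, f (u θ) (v θ) ∈ Icc 0 (c * u θ))
    (hkf : Integrable (fun θ => k t θ * f (u θ) (v θ)) μ) :
    hammerstein μ k f u v t ≤ κ * c * ∫ θ, u θ ∂μ := by
  rw [← integral_const_mul]
  refine integral_mono_ae hkf (hu.const_mul _) ?_
  filter_upwards [hk, hf] with θ hkθ hfθ
  calc k t θ * f (u θ) (v θ) ≤ κ * (c * u θ) := mul_le_mul hkθ hfθ.2 hfθ.1 hκ
    _ = κ * c * u θ := (mul_assoc _ _ _).symm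

theorem nehari_hammerstein_neg [IsProbabilityMeasure μ] (hu : MemLp u ⊤ μ)
    (hu_nonneg : 0 ≤ᵐ[μ] u) (hu_pos : 0 < ∫ t, u t ∂μ) (hκ : 0 ≤ κ)
    (hk : ∀ᵐ t ∂μ, ∀ᵐ θ ∂μ, k t θ ≤ κ) (hf : ∀ᵐ θ ∂μ, f (u θ) (v θ) ∈ Icc 0 (c * u θ))
    (hκc : κ * c < 1)
    (hkf : Integrable (fun p : X × X => k p.1 p.2 * f (u p.2) (v p.2)) (μ.prod μ)) :
    nehari μ (hammerstein μ k f u v) u < 0 := by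
  have hT : Integrable (hammerstein μ k f u v) μ := hkf.integral_prod_left
  refine nehari_neg_of_le_mul_integral (hu.mono_exponent le_top) (hT.mul_of_top_left hu)
    hu_nonneg hu_pos hκc ?_
  filter_upwards [hk, hkf.prod_right_ae] with t hkt hkft
  exact hammerstein_le_mul_integral (hu.integrable le_top) hκ hkt hf hkft

end Nehari

section UnitInterval

variable {k : ℝ → ℝ → ℝ} {f : ℝ → ℝ → ℝ} {u v : ℝ → ℝ}
  {E : Type*} [NormedAddCommGroup E]

instance isProbabilityMeasure_restrict_Ioc_zero_one :
    IsProbabilityMeasure (volume.restrict (Ioc (0 : ℝ) 1)) :=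
  ⟨by simp⟩

theorem nehariF_eq_nehari_hammerstein (k f : ℝ → ℝ → ℝ) (u v : ℝ → ℝ) (σ : ℝ) :
    nehariF k f u v σ = nehari (volume.restrict (Ioc 0 1))
      (hammerstein (volume.restrict (Ioc 0 1)) k f (fun t => σ * u t) v) (fun t => σ * u t) := by
  simp only [nehariF, nehari, hammerstein, intervalIntegral.integral_of_le zero_le_one]

theorem memLp_top_restrict_Ioc_of_continuousOn_Icc {a b : ℝ} {g : ℝ → E}
    (hg : ContinuousOn g (Icc a b)) : MemLp g ⊤ (volume.restrict (Ioc a b)) := by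
  obtain ⟨C, hC⟩ := isCompact_Icc.exists_bound_of_continuousOn hg
  exact memLp_top_of_bound
    ((hg.mono Ioc_subset_Icc_self).aestronglyMeasurable measurableSet_Ioc) C
    (ae_restrict_of_forall_mem measurableSet_Ioc fun t ht => hC t (Ioc_subset_Icc_self ht))

theorem integrable_prod_restrict_Ioc_of_continuousOn_Icc {a b c d : ℝ} {g : ℝ × ℝ → E}
    (hg : ContinuousOn g (Icc a b ×ˢ Icc c d)) :
    Integrable g ((volume.restrict (Ioc a b)).prod (volume.restrict (Ioc c d))) := by
  rw [Measure.prod_restrict, ← Measure.volume_eq_prod]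
  exact (hg.integrableOn_compact (isCompact_Icc.prod isCompact_Icc)).mono_set
    (prod_mono Ioc_subset_Icc_self Ioc_subset_Icc_self)

theorem isGreatest_supNorm (hu : ContinuousOn u (Icc 0 1)) :
    IsGreatest ((fun t => |u t|) '' Icc (0 : ℝ) 1) (supNorm u) :=
  (isCompact_Icc.image_of_continuousOn hu.abs).isGreatest_sSup
    ((nonempty_Icc.mpr zero_le_one).image _)

theorem integral_pos_of_supNorm_pos (hu : ContinuousOn u (Icc 0 1))
    (hu_nonneg : ∀ t ∈ Icc (0 : ℝ) 1, 0 ≤ u t) (hu_norm : 0 < supNorm u) :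
    0 < ∫ t in (0 : ℝ)..1, u t := by
  obtain ⟨t, ht, hut⟩ := (isGreatest_supNorm hu).1
  have hut_pos : 0 < u t := by
    rwa [← abs_of_nonneg (hu_nonneg t ht), show |u t| = supNorm u from hut]
  exact intervalIntegral.integral_pos zero_lt_one hu
    (fun s hs => hu_nonneg s (Ioc_subset_Icc_self hs)) ⟨t, ht, hut_pos⟩

theorem nehariF_neg_of_mem_Icc {c κ σ : ℝ}
    (hk : ContinuousOn (fun p : ℝ × ℝ => k p.1 p.2) (Icc 0 1 ×ˢ Icc 0 1)) (hκ : 0 ≤ κ)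
    (hkκ : ∀ t ∈ Icc (0 : ℝ) 1, ∀ θ ∈ Icc (0 : ℝ) 1, k t θ ≤ κ) (hκc : κ * c < 1)
    (hu : ContinuousOn u (Icc 0 1)) (hu_nonneg : ∀ t ∈ Icc (0 : ℝ) 1, 0 ≤ u t)
    (hu_norm : 0 < supNorm u) (hσ : 0 < σ)
    (hfuv : ContinuousOn (fun t => f (σ * u t) (v t)) (Icc 0 1))
    (hf : ∀ t ∈ Icc (0 : ℝ) 1, f (σ * u t) (v t) ∈ Icc 0 (c * (σ * u t))) :
    nehariF k f u v σ < 0 := by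
  have ae_of_Icc {p : ℝ → Prop} (hp : ∀ t ∈ Icc (0 : ℝ) 1, p t) :
      ∀ᵐ t ∂volume.restrict (Ioc (0 : ℝ) 1), p t :=
    ae_restrict_of_forall_mem measurableSet_Ioc fun t ht => hp t (Ioc_subset_Icc_self ht)
  have hσu_pos : 0 < ∫ t in Ioc (0 : ℝ) 1, σ * u t := by
    rw [integral_const_mul, ← intervalIntegral.integral_of_le zero_le_one]
    exact mul_pos hσ (integral_pos_of_supNorm_pos hu hu_nonneg hu_norm)
  have hkf : ContinuousOn (fun p : ℝ × ℝ => k p.1 p.2 * f (σ * u p.2) (v p.2))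
      (Icc 0 1 ×ˢ Icc 0 1) :=
    hk.mul (hfuv.comp continuousOn_snd fun _ hp => hp.2)
  rw [nehariF_eq_nehari_hammerstein]
  exact nehari_hammerstein_neg
    (memLp_top_restrict_Ioc_of_continuousOn_Icc (continuousOn_const.mul hu))
    (ae_of_Icc fun t ht => mul_nonneg hσ.le (hu_nonneg t ht)) hσu_pos hκ
    (ae_of_Icc fun t ht => ae_of_Icc (hkκ t ht)) (ae_of_Icc hf) hκc
    (integrable_prod_restrict_Ioc_of_continuousOn_Icc hkf)

theorem F_neg_for_small_sigma_general {c δ κ : ℝ} {S : Set ℝ}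
    (hk : ContinuousOn (fun p : ℝ × ℝ => k p.1 p.2) (Icc 0 1 ×ˢ Icc 0 1)) (hκ : 0 ≤ κ)
    (hkκ : ∀ t ∈ Icc (0 : ℝ) 1, ∀ θ ∈ Icc (0 : ℝ) 1, k t θ ≤ κ) (hκc : κ * c < 1)
    (hf : ContinuousOn (fun p : ℝ × ℝ => f p.1 p.2) (Icc 0 δ ×ˢ S))
    (hf_mem : ∀ x ∈ Icc 0 δ, ∀ y ∈ S, f x y ∈ Icc 0 (c * x))
    (hu : ContinuousOn u (Icc 0 1)) (hu_nonneg : ∀ t ∈ Icc (0 : ℝ) 1, 0 ≤ u t)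
    (hu_norm : supNorm u = 1) (hv : ContinuousOn v (Icc 0 1)) (hvS : MapsTo v (Icc 0 1) S) :
    (∀ σ : ℝ, 0 < σ → σ ≤ δ → nehariF k f u v σ < 0) ∧
      ∀ σ : ℝ, 0 < σ → nehariF k f u v σ = 0 → δ < σ := by
  have neg (σ : ℝ) (hσ : 0 < σ) (hσδ : σ ≤ δ) : nehariF k f u v σ < 0 := by
    have hu_le_one (t : ℝ) (ht : t ∈ Icc (0 : ℝ) 1) : u t ≤ 1 :=
      hu_norm ▸ (le_abs_self _).trans ((isGreatest_supNorm hu).2 ⟨t, ht, rfl⟩)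
    have hσu (t : ℝ) (ht : t ∈ Icc (0 : ℝ) 1) : σ * u t ∈ Icc 0 δ :=
      ⟨mul_nonneg hσ.le (hu_nonneg t ht),
        (mul_le_of_le_one_right hσ.le (hu_le_one t ht)).trans hσδ⟩
    have hfuv : ContinuousOn (fun t => f (σ * u t) (v t)) (Icc 0 1) :=
      hf.comp (f := fun t => (σ * u t, v t)) ((continuousOn_const.mul hu).prodMk hv)
        fun t ht => ⟨hσu t ht, hvS ht⟩
    exact nehariF_neg_of_mem_Icc hk hκ hkκ hκc hu hu_nonneg (hu_norm ▸ one_pos) hσ hfuv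
      fun t ht => hf_mem _ (hσu t ht) _ (hvS ht)
  exact ⟨neg, fun σ hσ hzero => lt_of_not_ge fun hσδ => (neg σ hσ hσδ).ne hzero⟩

end UnitInterval

theorem F_neg_for_small_sigma
    -- k₁ is a nonnegative continuous function on [0,1]²
    (k₁ : ℝ → ℝ → ℝ)
    (hk₁cont : ContinuousOn (fun p : ℝ × ℝ => k₁ p.1 p.2)
      (Set.Icc 0 1 ×ˢ Set.Icc 0 1))
    (hk₁nonneg : ∀ t ∈ Set.Icc (0:ℝ) 1, ∀ θ ∈ Set.Icc (0:ℝ) 1, 0 ≤ k₁ t θ)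
    -- f is continuous with f(x,y) ≥ 0 for x ≥ 0
    (f : ℝ → ℝ → ℝ) (hfcont : Continuous (fun p : ℝ × ℝ => f p.1 p.2))
    (hfnonneg : ∀ x : ℝ, 0 ≤ x → ∀ y : ℝ, 0 ≤ f x y)
    (R : ℝ) (hR : 0 < R)
    -- condition (H1)
    (Φ : ℝ → ℝ) (hΦcont : ContinuousOn Φ (Set.Icc 0 1))
    (hΦnonneg : ∀ θ ∈ Set.Icc (0:ℝ) 1, 0 ≤ Φ θ)
    (a b : ℝ) (ha : 0 ≤ a) (hab : a ≤ b) (hb : b ≤ 1)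
    (c₁ : ℝ) (hc₁pos : 0 < c₁) (hc₁le : c₁ ≤ 1)
    (hk₁upper : ∀ t ∈ Set.Icc (0:ℝ) 1, ∀ θ ∈ Set.Icc (0:ℝ) 1, k₁ t θ ≤ Φ θ)
    (hk₁lower : ∀ t ∈ Set.Icc a b, ∀ θ ∈ Set.Icc (0:ℝ) 1, c₁ * Φ θ ≤ k₁ t θ)
    -- α₁ := max_{t∈[0,1]} Φ(t), with α₁ > 0
    (α₁ : ℝ) (hα₁ : IsGreatest (Φ '' Set.Icc (0:ℝ) 1) α₁) (hα₁pos : 0 < α₁)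
    -- quantitative form of (H2)
    (c₂ : ℝ) (hc₂pos : 0 < c₂) (hc₂lt : c₂ < 1 / α₁)
    (δ₀ : ℝ) (hδ₀ : 0 < δ₀)
    (hH2 : ∀ x : ℝ, 0 ≤ x → x ≤ δ₀ → ∀ y : ℝ, |y| ≤ R → f x y ≤ c₂ * x)
    -- u ∈ K₁ with |u|_∞ = 1, v ∈ C([0,1],ℝ) with |v|_∞ ≤ R
    (u v : ℝ → ℝ) (hu : memK₁ a b c₁ u) (huNorm : supNorm u = 1)
    (hvcont : ContinuousOn v (Set.Icc 0 1))
    (hvR : ∀ t ∈ Set.Icc (0:ℝ) 1, |v t| ≤ R) :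
    (∀ σ : ℝ, 0 < σ → σ < δ₀ → nehariF k₁ f u v σ < 0) ∧
      (∀ σ : ℝ, 0 < σ → nehariF k₁ f u v σ = 0 → δ₀ ≤ σ) := by
  have h := F_neg_for_small_sigma_general hk₁cont hα₁pos.le
    (fun t ht θ hθ => (hk₁upper t ht θ hθ).trans (hα₁.2 (mem_image_of_mem Φ hθ)))
    ((lt_div_iff₀' hα₁pos).mp hc₂lt) hfcont.continuousOn
    (fun x hx y hy => ⟨hfnonneg x hx.1 y, hH2 x hx.1 hx.2 y hy⟩) hu.1 hu.2.1 huNorm hvcont hvR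
  exact h.imp (fun neg σ hσ hσδ => neg σ hσ hσδ.le) (fun lt σ hσ hzero => (lt σ hσ hzero).le)
end

section
/- Assume (H1) and the quantitative form of (H3): there exist c₄ with c₄ > 1/(c₁²·α₂) and x₀ > 0 such that f(x,y) ≥ c₄·x for all x ≥ x₀ and all |y| ≤ R. Then there exists σ₀ > 0 such that for every u ∈ K₁ with |u|_∞ = 1, every v ∈ C([0,1],ℝ) with |v|_∞ ≤ R, and every σ ≥ σ₀, one has 𝓕(T₁(σu, v), σu) > 0. In particular, any σ > 0 satisfying 𝓕(T₁(σu, v), σu) = 0 satisfies σ < σ₀. -/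
/-!
Put `w = σu` and `ρ = |w|_∞`. By Fubini, `∫₀¹ T₁(w, v) w` is the integral of
`k₁(t, θ) f(w(θ), v(θ)) w(t)` over the unit square, which only decreases when the domain is shrunk
to `[a,b]²`. There `w ≥ c₁ρ`, hence also `f(w, v) ≥ c₄c₁ρ` once `c₁ρ ≥ x₀`, so this integral is at
least `c₄c₁²α₂ρ²`. It beats `∫₀¹ w² ≤ ρ²` because `c₄c₁²α₂ > 1`.
-/

section KernelIntegrals

open MeasureTheory

variable {X Y : Type*} [MeasurableSpace X] [MeasurableSpace Y] {μ : Measure X} {ν : Measure Y}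

theorem mul_setIntegral_le_setIntegral_mul {s t : Set X} {F h : X → ℝ} {c : ℝ}
    (hs : MeasurableSet s) (ht : MeasurableSet t) (hst : s ⊆ t)
    (hF : ∀ x ∈ t, 0 ≤ F x) (hh : ∀ x ∈ t, 0 ≤ h x) (hch : ∀ x ∈ s, c ≤ h x)
    (hFint : IntegrableOn F s μ) (hFhint : IntegrableOn (fun x ↦ F x * h x) t μ) :
    c * ∫ x in s, F x ∂μ ≤ ∫ x in t, F x * h x ∂μ :=
  calc c * ∫ x in s, F x ∂μ = ∫ x in s, F x * c ∂μ := by rw [integral_mul_const, mul_comm]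
    _ ≤ ∫ x in s, F x * h x ∂μ :=
      setIntegral_mono_on (hFint.mul_const c) (hFhint.mono_set hst) hs fun x hx ↦
        mul_le_mul_of_nonneg_left (hch x hx) (hF x (hst hx))
    _ ≤ ∫ x in t, F x * h x ∂μ :=
      setIntegral_mono_set hFhint
        (ae_restrict_of_forall_mem ht fun x hx ↦ mul_nonneg (hF x hx) (hh x hx)) hst.eventuallyLE

theorem mul_setIntegral_setIntegral_le_of_le [SFinite μ] [SFinite ν]
    {s S : Set X} {t T : Set Y} {k : X → Y → ℝ} {g : Y → ℝ} {w : X → ℝ} {ℓ m : ℝ}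
    (hs : MeasurableSet s) (hS : MeasurableSet S) (ht : MeasurableSet t) (hT : MeasurableSet T)
    (hsS : s ⊆ S) (htT : t ⊆ T)
    (hk : ∀ x ∈ S, ∀ y ∈ T, 0 ≤ k x y) (hg : ∀ y ∈ T, 0 ≤ g y) (hw : ∀ x ∈ S, 0 ≤ w x)
    (hℓ : ∀ y ∈ t, ℓ ≤ g y) (hm₀ : 0 ≤ m) (hm : ∀ x ∈ s, m ≤ w x)
    (hkint : IntegrableOn (fun p : X × Y ↦ k p.1 p.2) (s ×ˢ t) (μ.prod ν))
    (hkgw : IntegrableOn (fun p : X × Y ↦ k p.1 p.2 * g p.2 * w p.1) (S ×ˢ T) (μ.prod ν)) :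
    ℓ * m * ∫ x in s, ∫ y in t, k x y ∂ν ∂μ ≤ ∫ x in S, (∫ y in T, k x y * g y ∂ν) * w x ∂μ := by
  simp only [← integral_mul_const]
  rw [← setIntegral_prod _ hkint, ← setIntegral_prod _ hkgw]
  simp only [mul_assoc (k _ _)] at hkgw ⊢
  refine mul_setIntegral_le_setIntegral_mul (hs.prod ht) (hS.prod hT) (Set.prod_mono hsS htT)
    (fun p hp ↦ hk _ hp.1 _ hp.2) (fun p hp ↦ mul_nonneg (hg _ hp.2) (hw _ hp.1))
    (fun p hp ↦ ?_) hkint hkgw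
  exact mul_le_mul (hℓ _ hp.2) (hm _ hp.1) hm₀ (hg _ (htT hp.2))

theorem setIntegral_integral_sub_mul_self_pos [SFinite μ]
    {s S : Set X} {k : X → X → ℝ} {g w : X → ℝ} {ℓ m : ℝ}
    (hs : MeasurableSet s) (hS : MeasurableSet S) (hsS : s ⊆ S)
    (hk : ∀ x ∈ S, ∀ y ∈ S, 0 ≤ k x y) (hg : ∀ y ∈ S, 0 ≤ g y) (hw : ∀ x ∈ S, 0 ≤ w x)
    (hℓ : ∀ y ∈ s, ℓ ≤ g y) (hm₀ : 0 ≤ m) (hm : ∀ x ∈ s, m ≤ w x)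
    (hkint : IntegrableOn (fun p : X × X ↦ k p.1 p.2) (s ×ˢ s) (μ.prod μ))
    (hkgw : IntegrableOn (fun p : X × X ↦ k p.1 p.2 * g p.2 * w p.1) (S ×ˢ S) (μ.prod μ))
    (hwint : IntegrableOn (fun x ↦ w x ^ 2) S μ)
    (hlt : ∫ x in S, w x ^ 2 ∂μ < ℓ * m * ∫ x in s, ∫ y in s, k x y ∂μ ∂μ) :
    0 < ∫ x in S, ((∫ y in S, k x y * g y ∂μ) - w x) * w x ∂μ := by
  have hTw : IntegrableOn (fun x ↦ (∫ y in S, k x y * g y ∂μ) * w x) S μ := by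
    rw [IntegrableOn, ← Measure.prod_restrict] at hkgw
    simpa only [integral_mul_const, IntegrableOn] using hkgw.integral_prod_left
  simp only [sub_mul, ← sq]
  rw [integral_sub hTw hwint, sub_pos]
  exact hlt.trans_le <|
    mul_setIntegral_setIntegral_le_of_le hs hS hs hS hsS hsS hk hg hw hℓ hm₀ hm hkint hkgw

end KernelIntegrals

section SupNorm

variable {u : ℝ → ℝ}

theorem supNorm_nonneg (u : ℝ → ℝ) : 0 ≤ supNorm u :=
  Real.sSup_nonneg (by rintro _ ⟨t, -, rfl⟩; exact abs_nonneg (u t))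

theorem abs_le_supNorm (hu : ContinuousOn u (Set.Icc 0 1)) {t : ℝ} (ht : t ∈ Set.Icc (0 : ℝ) 1) :
    |u t| ≤ supNorm u :=
  le_csSup (isCompact_Icc.bddAbove_image hu.abs) (Set.mem_image_of_mem _ ht)

theorem setIntegral_sq_le_supNorm_sq (hu : ContinuousOn u (Set.Icc 0 1)) :
    ∫ t in Set.Icc (0 : ℝ) 1, u t ^ 2 ≤ supNorm u ^ 2 := by
  have hbound : ∀ t ∈ Set.Icc (0 : ℝ) 1, ‖u t ^ 2‖ ≤ supNorm u ^ 2 := fun t ht ↦ by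
    rw [norm_pow, Real.norm_eq_abs]
    gcongr
    exact abs_le_supNorm hu ht
  have hnorm := MeasureTheory.norm_setIntegral_le_of_norm_le_const
    (μ := MeasureTheory.volume) measure_Icc_lt_top hbound
  simpa using (Real.le_norm_self _).trans hnorm

end SupNorm

section NehariFunctional

open MeasureTheory

variable {k₁ f : ℝ → ℝ → ℝ} {u v : ℝ → ℝ} {σ a b : ℝ}

theorem nehariF_eq_setIntegral (k₁ f : ℝ → ℝ → ℝ) (u v : ℝ → ℝ) (σ : ℝ) :
    nehariF k₁ f u v σ = ∫ t in Set.Icc (0 : ℝ) 1,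
      ((∫ θ in Set.Icc (0 : ℝ) 1, k₁ t θ * f (σ * u θ) (v θ)) - σ * u t) * (σ * u t) := by
  simp only [nehariF, intervalIntegral.integral_of_le zero_le_one, integral_Icc_eq_integral_Ioc]

theorem nehariF_pos_of_le {ℓ m : ℝ}
    (hk₁cont : ContinuousOn (fun p : ℝ × ℝ ↦ k₁ p.1 p.2) (Set.Icc 0 1 ×ˢ Set.Icc 0 1))
    (hk₁nonneg : ∀ t ∈ Set.Icc (0 : ℝ) 1, ∀ θ ∈ Set.Icc (0 : ℝ) 1, 0 ≤ k₁ t θ)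
    (ha : 0 ≤ a) (hab : a ≤ b) (hb : b ≤ 1)
    (hu : ContinuousOn u (Set.Icc 0 1))
    (hf : ContinuousOn (fun θ ↦ f (σ * u θ) (v θ)) (Set.Icc 0 1))
    (hu₀ : ∀ t ∈ Set.Icc (0 : ℝ) 1, 0 ≤ σ * u t)
    (hf₀ : ∀ θ ∈ Set.Icc (0 : ℝ) 1, 0 ≤ f (σ * u θ) (v θ))
    (hℓ : ∀ θ ∈ Set.Icc a b, ℓ ≤ f (σ * u θ) (v θ))
    (hm₀ : 0 ≤ m) (hm : ∀ t ∈ Set.Icc a b, m ≤ σ * u t)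
    (hlt : (σ * supNorm u) ^ 2 < ℓ * m * ∫ t in a..b, ∫ θ in a..b, k₁ t θ) :
    0 < nehariF k₁ f u v σ := by
  have hsub : Set.Icc a b ⊆ Set.Icc (0 : ℝ) 1 := Set.Icc_subset_Icc ha hb
  have hσu : ContinuousOn (fun t ↦ σ * u t) (Set.Icc 0 1) := continuousOn_const.mul hu
  have hkgw : ContinuousOn (fun p : ℝ × ℝ ↦ k₁ p.1 p.2 * f (σ * u p.2) (v p.2) * (σ * u p.1))
      (Set.Icc 0 1 ×ˢ Set.Icc 0 1) :=
    (hk₁cont.mul (hf.comp continuousOn_snd fun _ hp ↦ hp.2)).mul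
      (hσu.comp continuousOn_fst fun _ hp ↦ hp.1)
  have hsq : ∫ t in Set.Icc (0 : ℝ) 1, (σ * u t) ^ 2 ≤ (σ * supNorm u) ^ 2 := by
    simp only [mul_pow, integral_const_mul]
    exact mul_le_mul_of_nonneg_left (setIntegral_sq_le_supNorm_sq hu) (sq_nonneg σ)
  simp only [intervalIntegral.integral_of_le hab, ← integral_Icc_eq_integral_Ioc] at hlt
  rw [nehariF_eq_setIntegral]
  exact setIntegral_integral_sub_mul_self_pos measurableSet_Icc measurableSet_Icc hsub
    hk₁nonneg hf₀ hu₀ hℓ hm₀ hm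
    ((hk₁cont.mono (Set.prod_mono hsub hsub)).integrableOn_compact
      (isCompact_Icc.prod isCompact_Icc))
    (hkgw.integrableOn_compact (isCompact_Icc.prod isCompact_Icc))
    (hσu.pow 2).integrableOn_Icc (hsq.trans_lt hlt)

end NehariFunctional

theorem F_pos_for_large_sigma_general {k₁ f : ℝ → ℝ → ℝ} {Y : Set ℝ} {a b c₁ c₄ x₀ : ℝ}
    (hk₁cont : ContinuousOn (fun p : ℝ × ℝ ↦ k₁ p.1 p.2) (Set.Icc 0 1 ×ˢ Set.Icc 0 1))
    (hk₁nonneg : ∀ t ∈ Set.Icc (0 : ℝ) 1, ∀ θ ∈ Set.Icc (0 : ℝ) 1, 0 ≤ k₁ t θ)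
    (hfcont : ContinuousOn (fun p : ℝ × ℝ ↦ f p.1 p.2) (Set.Ici 0 ×ˢ Y))
    (hfnonneg : ∀ x, 0 ≤ x → ∀ y ∈ Y, 0 ≤ f x y)
    (ha : 0 ≤ a) (hab : a ≤ b) (hb : b ≤ 1) (hc₁ : 0 < c₁) (hx₀ : 0 < x₀)
    (hc₄ : 1 < c₄ * (c₁ ^ 2 * ∫ t in a..b, ∫ θ in a..b, k₁ t θ))
    (hflower : ∀ x, x₀ ≤ x → ∀ y ∈ Y, c₄ * x ≤ f x y)
    {u v : ℝ → ℝ} (hu : memK₁ a b c₁ u)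
    (hv : ContinuousOn v (Set.Icc 0 1)) (hvY : Set.MapsTo v (Set.Icc 0 1) Y)
    {σ : ℝ} (hσ : x₀ / c₁ ≤ σ * supNorm u) :
    0 < nehariF k₁ f u v σ := by
  obtain ⟨hucont, hu₀, hulower⟩ := hu
  have hsub : Set.Icc a b ⊆ Set.Icc (0 : ℝ) 1 := Set.Icc_subset_Icc ha hb
  have hρ : 0 < σ * supNorm u := (div_pos hx₀ hc₁).trans_le hσ
  have hσ₀ : 0 < σ := pos_of_mul_pos_left hρ (supNorm_nonneg u)
  have hσu₀ : ∀ t ∈ Set.Icc (0 : ℝ) 1, 0 ≤ σ * u t := fun t ht ↦ mul_nonneg hσ₀.le (hu₀ t ht)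
  have hα₂ : 0 ≤ ∫ t in a..b, ∫ θ in a..b, k₁ t θ :=
    intervalIntegral.integral_nonneg hab fun t ht ↦
      intervalIntegral.integral_nonneg hab fun θ hθ ↦ hk₁nonneg t (hsub ht) θ (hsub hθ)
  have hc₄₀ : 0 < c₄ := pos_of_mul_pos_left (one_pos.trans hc₄) (by positivity)
  have hσu : ∀ t ∈ Set.Icc a b, c₁ * (σ * supNorm u) ≤ σ * u t := fun t ht ↦ by
    rw [mul_left_comm]
    exact mul_le_mul_of_nonneg_left (hulower t ht) hσ₀.le
  have hx₀σu : ∀ t ∈ Set.Icc a b, x₀ ≤ σ * u t := fun t ht ↦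
    ((div_le_iff₀' hc₁).1 hσ).trans (hσu t ht)
  have hf : ∀ θ ∈ Set.Icc a b, c₄ * (c₁ * (σ * supNorm u)) ≤ f (σ * u θ) (v θ) := fun θ hθ ↦
    (mul_le_mul_of_nonneg_left (hσu θ hθ) hc₄₀.le).trans
      (hflower _ (hx₀σu θ hθ) _ (hvY (hsub hθ)))
  refine nehariF_pos_of_le hk₁cont hk₁nonneg ha hab hb hucont
    (hfcont.comp ((continuousOn_const.mul hucont).prodMk hv) fun θ hθ ↦ ⟨hσu₀ θ hθ, hvY hθ⟩)
    hσu₀ (fun θ hθ ↦ hfnonneg _ (hσu₀ θ hθ) _ (hvY hθ)) hf (by positivity) hσu ?_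
  linear_combination (σ * supNorm u) ^ 2 * hc₄

theorem F_pos_for_large_sigma
    -- k₁ is a nonnegative continuous function on [0,1]²
    (k₁ : ℝ → ℝ → ℝ)
    (hk₁cont : ContinuousOn (fun p : ℝ × ℝ => k₁ p.1 p.2)
      (Set.Icc 0 1 ×ˢ Set.Icc 0 1))
    (hk₁nonneg : ∀ t ∈ Set.Icc (0:ℝ) 1, ∀ θ ∈ Set.Icc (0:ℝ) 1, 0 ≤ k₁ t θ)
    -- f is continuous with f(x,y) ≥ 0 for x ≥ 0
    (f : ℝ → ℝ → ℝ) (hfcont : Continuous (fun p : ℝ × ℝ => f p.1 p.2))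
    (hfnonneg : ∀ x : ℝ, 0 ≤ x → ∀ y : ℝ, 0 ≤ f x y)
    (R : ℝ) (hR : 0 < R)
    -- condition (H1)
    (Φ : ℝ → ℝ) (hΦcont : ContinuousOn Φ (Set.Icc 0 1))
    (hΦnonneg : ∀ θ ∈ Set.Icc (0:ℝ) 1, 0 ≤ Φ θ)
    (a b : ℝ) (ha : 0 ≤ a) (hab : a ≤ b) (hb : b ≤ 1)
    (c₁ : ℝ) (hc₁pos : 0 < c₁) (hc₁le : c₁ ≤ 1)
    (hk₁upper : ∀ t ∈ Set.Icc (0:ℝ) 1, ∀ θ ∈ Set.Icc (0:ℝ) 1, k₁ t θ ≤ Φ θ)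
    (hk₁lower : ∀ t ∈ Set.Icc a b, ∀ θ ∈ Set.Icc (0:ℝ) 1, c₁ * Φ θ ≤ k₁ t θ)
    -- α₂ := ∫ₐᵇ∫ₐᵇ k₁(t,θ) dθ dt, with α₂ > 0
    (α₂ : ℝ) (hα₂ : α₂ = ∫ t in a..b, ∫ θ in a..b, k₁ t θ) (hα₂pos : 0 < α₂)
    -- quantitative form of (H3)
    (c₄ : ℝ) (hc₄ : 1 / (c₁ ^ 2 * α₂) < c₄)
    (x₀ : ℝ) (hx₀ : 0 < x₀)
    (hH3 : ∀ x : ℝ, x₀ ≤ x → ∀ y : ℝ, |y| ≤ R → c₄ * x ≤ f x y) :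
    ∃ σ₀ : ℝ, 0 < σ₀ ∧
      ∀ u v : ℝ → ℝ, memK₁ a b c₁ u → supNorm u = 1 →
        ContinuousOn v (Set.Icc 0 1) → (∀ t ∈ Set.Icc (0:ℝ) 1, |v t| ≤ R) →
        (∀ σ : ℝ, σ₀ ≤ σ → 0 < nehariF k₁ f u v σ) ∧
          (∀ σ : ℝ, 0 < σ → nehariF k₁ f u v σ = 0 → σ < σ₀) := by
  have hc₄' : 1 < c₄ * (c₁ ^ 2 * ∫ t in a..b, ∫ θ in a..b, k₁ t θ) := by
    rwa [← hα₂, ← div_lt_iff₀ (by positivity)]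
  have hpos : ∀ {u v : ℝ → ℝ}, memK₁ a b c₁ u → supNorm u = 1 → ContinuousOn v (Set.Icc 0 1) →
      (∀ t ∈ Set.Icc (0 : ℝ) 1, |v t| ≤ R) → ∀ σ, x₀ / c₁ ≤ σ → 0 < nehariF k₁ f u v σ :=
    fun hu hu₁ hv hvR σ hσ ↦
      F_pos_for_large_sigma_general (Y := {y | |y| ≤ R}) hk₁cont hk₁nonneg hfcont.continuousOn
        (fun x hx y _ ↦ hfnonneg x hx y) ha hab hb hc₁pos hx₀ hc₄' hH3 hu hv hvR
        (by rwa [hu₁, mul_one])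
  exact ⟨x₀ / c₁, div_pos hx₀ hc₁pos, fun u v hu hu₁ hv hvR ↦ ⟨hpos hu hu₁ hv hvR,
    fun σ _ hzero ↦ lt_of_not_ge fun hσ ↦ (hpos hu hu₁ hv hvR σ hσ).ne' hzero⟩⟩
end
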